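/- arXiv:1607.05828 — 7 statements merged into one kernel-verified Lean document; each statement's English description precedes it below -/
import Mathlib

section
/- Let n ≥ 2 be an integer, a > n − 2 a real number, b = (n−1)/(a−n+2), k ∈ ℝ, and define f : ℝⁿ → ℝ by f(x¹,…,xⁿ) = a Σ_{i=1}^{n−1} (xⁱ)² + b (xⁿ)² − 2 Σ_{1≤i<j≤n} xⁱ xʲ. Then f(x) ≥ 0 for every x = (x¹,…,xⁿ) ∈ ℝⁿ satisfying x¹ + ⋯ + xⁿ = k. -/
/-!
Since `2 Σ_{i<j} xᵢxⱼ = (Σ xᵢ)² − Σ xᵢ²`, a form `Σ dᵢxᵢ² − 2 Σ_{i<j} xᵢxⱼ` equals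
`Σ (dᵢ + 1) xᵢ² − (Σ xᵢ)²`. By Cauchy–Schwarz this is nonnegative as soon as every `dᵢ + 1`
is positive and `Σ 1 / (dᵢ + 1) ≤ 1`. With `n - 1` coefficients equal to `a` and one equal to
`b`, the equation `b = (n - 1) / (a - n + 2)` says exactly that
`(n - 1) / (a + 1) + 1 / (b + 1) = 1`.
-/

open Finset

theorem sum_sq_add_two_mul_sum_sum_ite_lt {ι R : Type*} [LinearOrder ι] [CommSemiring R]
    (s : Finset ι) (x : ι → R) :
    ∑ i ∈ s, x i ^ 2 + 2 * ∑ i ∈ s, ∑ j ∈ s, (if i < j then x i * x j else 0) =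
      (∑ i ∈ s, x i) ^ 2 := by
  have split (i j : ι) : x i * x j = (if i = j then x i * x j else 0) +
      (if i < j then x i * x j else 0) + (if j < i then x j * x i else 0) := by
    rcases lt_trichotomy i j with h | rfl | h
    · simp [h, h.ne, h.not_gt]
    · simp
    · simp [h, h.ne', h.not_gt, mul_comm]
  have diagonal : ∑ i ∈ s, ∑ j ∈ s, (if i = j then x i * x j else 0) = ∑ i ∈ s, x i ^ 2 :=
    sum_congr rfl fun i hi => by rw [sum_ite_eq, if_pos hi, sq]
  have swap : ∑ i ∈ s, ∑ j ∈ s, (if j < i then x j * x i else 0) =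
      ∑ i ∈ s, ∑ j ∈ s, (if i < j then x i * x j else 0) := sum_comm
  symm
  calc
    (∑ i ∈ s, x i) ^ 2 = ∑ i ∈ s, ∑ j ∈ s, x i * x j := by rw [sq, sum_mul_sum]
    _ = ∑ i ∈ s, ∑ j ∈ s, ((if i = j then x i * x j else 0) +
          (if i < j then x i * x j else 0) + (if j < i then x j * x i else 0)) :=
      sum_congr rfl fun i _ => sum_congr rfl fun j _ => split i j
    _ = ∑ i ∈ s, x i ^ 2 + 2 * ∑ i ∈ s, ∑ j ∈ s, (if i < j then x i * x j else 0) := by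
      simp_rw [sum_add_distrib, diagonal, swap, two_mul, add_assoc]

theorem sq_sum_le_sum_mul_sq_of_sum_inv_le_one {ι K : Type*} [Semifield K] [LinearOrder K]
    [IsStrictOrderedRing K] [ExistsAddOfLE K] {s : Finset ι} {c : ι → K} (hc : ∀ i ∈ s, 0 < c i)
    (hsum : ∑ i ∈ s, (c i)⁻¹ ≤ 1) (x : ι → K) :
    (∑ i ∈ s, x i) ^ 2 ≤ ∑ i ∈ s, c i * x i ^ 2 := by
  have nonneg : ∀ i ∈ s, 0 ≤ c i * x i ^ 2 := fun i hi =>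
    mul_nonneg (hc i hi).le (sq_nonneg _)
  calc
    (∑ i ∈ s, x i) ^ 2 ≤ (∑ i ∈ s, (c i)⁻¹) * ∑ i ∈ s, c i * x i ^ 2 :=
      sum_sq_le_sum_mul_sum_of_sq_le_mul s (fun i hi => (inv_pos.2 (hc i hi)).le) nonneg
        fun i hi => (inv_mul_cancel_left₀ (hc i hi).ne' _).ge
    _ ≤ ∑ i ∈ s, c i * x i ^ 2 := mul_le_of_le_one_left (sum_nonneg nonneg) hsum

theorem sum_apply_update_of_mem {ι α M : Type*} [DecidableEq ι] [AddCommMonoid M] {s : Finset ι}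
    {i₀ : ι} (h : i₀ ∈ s) (g : ι → α → M) (d : ι → α) (b : α) :
    ∑ i ∈ s, g i (Function.update d i₀ b i) = g i₀ b + ∑ i ∈ s \ {i₀}, g i (d i) := by
  rw [sum_eq_add_sum_sdiff_singleton_of_mem h, Function.update_self]
  congr 1
  refine sum_congr rfl fun i hi => ?_
  rw [Function.update_of_ne (by simpa using (mem_sdiff.1 hi).2)]

section OrderedField

variable {ι K : Type*} [LinearOrder ι] [Field K] [LinearOrder K] [IsStrictOrderedRing K]

theorem two_mul_sum_sum_ite_lt_le_of_sum_inv_le_one {s : Finset ι} {d : ι → K}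
    (hd : ∀ i ∈ s, 0 < d i + 1) (hsum : ∑ i ∈ s, (d i + 1)⁻¹ ≤ 1) (x : ι → K) :
    2 * ∑ i ∈ s, ∑ j ∈ s, (if i < j then x i * x j else 0) ≤ ∑ i ∈ s, d i * x i ^ 2 := by
  have cauchy : (∑ i ∈ s, x i) ^ 2 ≤ ∑ i ∈ s, (d i + 1) * x i ^ 2 :=
    sq_sum_le_sum_mul_sq_of_sum_inv_le_one hd hsum x
  simp_rw [← sum_sq_add_two_mul_sum_sum_ite_lt, add_one_mul, sum_add_distrib] at cauchy
  linarith

theorem inv_add_one_add_mul_inv_add_one_le_one {n a b : K} (hn : 1 ≤ n)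
    (ha : n - 2 < a) (hb : (n - 1) / (a - n + 2) ≤ b) :
    (b + 1)⁻¹ + (n - 1) * (a + 1)⁻¹ ≤ 1 := by
  have denom_pos : 0 < a - n + 2 := by linarith
  have add_one_pos : 0 < a + 1 := by linarith
  have le_add_one : (a + 1) / (a - n + 2) ≤ b + 1 := by
    calc
      (a + 1) / (a - n + 2) = (n - 1) / (a - n + 2) + 1 := by field_simp; ring
      _ ≤ b + 1 := by gcongr
  calc
    (b + 1)⁻¹ + (n - 1) * (a + 1)⁻¹
        ≤ ((a + 1) / (a - n + 2))⁻¹ + (n - 1) * (a + 1)⁻¹ := by gcongr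
    _ = 1 := by field_simp; ring

theorem quadratic_form_nonneg_on_hyperplane_general [Fintype ι] (i₀ : ι) {a b : K}
    (ha : (Fintype.card ι : K) - 2 < a)
    (hb : ((Fintype.card ι : K) - 1) / (a - Fintype.card ι + 2) ≤ b) (x : ι → K) :
    0 ≤ a * ∑ i ∈ {i₀}ᶜ, x i ^ 2 + b * x i₀ ^ 2
      - 2 * ∑ i, ∑ j, (if i < j then x i * x j else 0) := by
  have card_pos : 1 ≤ Fintype.card ι := Fintype.card_pos_iff.2 ⟨i₀⟩
  have one_le_card : (1 : K) ≤ Fintype.card ι := by exact_mod_cast card_pos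
  have b_nonneg : 0 ≤ b := (div_nonneg (by linarith) (by linarith)).trans hb
  let d : ι → K := Function.update (fun _ => a) i₀ b
  have d_pos (i : ι) : 0 < d i + 1 := by
    rcases eq_or_ne i i₀ with rfl | h
    · simpa [d] using b_nonneg.trans_lt (lt_add_one b)
    · simp only [d, Function.update_of_ne h]
      linarith
  have sum_inv_le : ∑ i, (d i + 1)⁻¹ ≤ 1 := by
    rw [sum_apply_update_of_mem (mem_univ i₀) fun _ t => (t + 1)⁻¹, ← compl_eq_univ_sdiff,
      sum_const, card_compl, card_singleton, nsmul_eq_mul,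
      Nat.cast_sub card_pos, Nat.cast_one]
    exact inv_add_one_add_mul_inv_add_one_le_one one_le_card ha hb
  have le_form := two_mul_sum_sum_ite_lt_le_of_sum_inv_le_one (fun i _ => d_pos i) sum_inv_le x
  rw [sum_apply_update_of_mem (mem_univ i₀) fun i t => t * x i ^ 2, ← compl_eq_univ_sdiff,
    ← mul_sum] at le_form
  linarith

end OrderedField

theorem filter_val_lt_sub_one_eq_compl_singleton {n : ℕ} (hn : n - 1 < n) :
    univ.filter (fun i : Fin n => (i : ℕ) < n - 1) = {⟨n - 1, hn⟩}ᶜ := by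
  ext i
  simp only [mem_filter_univ, mem_compl, mem_singleton, Fin.ext_iff]
  omega

/-- For `a > n − 2` and `b = (n−1)/(a−n+2)`, the quadratic form
`f(x) = a Σ_{i<n} (xⁱ)² + b (xⁿ)² − 2 Σ_{i<j} xⁱxʲ` is nonnegative on the
hyperplane `{x : Σ xⁱ = k}`. -/
theorem quadratic_form_nonneg_on_hyperplane
    (n : ℕ) (hn : 2 ≤ n) (a b k : ℝ) (ha : (n : ℝ) - 2 < a)
    (hb : b = ((n : ℝ) - 1) / (a - (n : ℝ) + 2))
    (f : (Fin n → ℝ) → ℝ)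
    (hf : ∀ x : Fin n → ℝ,
      f x = a * ∑ i ∈ Finset.univ.filter (fun i : Fin n => (i : ℕ) < n - 1), (x i) ^ 2
          + b * (x ⟨n - 1, by omega⟩) ^ 2
          - 2 * ∑ i : Fin n, ∑ j : Fin n, if i < j then x i * x j else 0)
    (x : Fin n → ℝ) (hx : ∑ i : Fin n, x i = k) :
    0 ≤ f x := by
  rw [hf, filter_val_lt_sub_one_eq_compl_singleton]
  exact quadratic_form_nonneg_on_hyperplane_general _ (by simpa using ha) (by simp [hb]) x
end

section
/- Let n ≥ 2 be an integer, a > n − 2 a real number, b = (n−1)/(a−n+2), k ∈ ℝ, and f(x¹,…,xⁿ) = a Σ_{i=1}^{n−1} (xⁱ)² + b (xⁿ)² − 2 Σ_{1≤i<j≤n} xⁱ xʲ. Then the point x₀ given by x₀¹ = x₀² = ⋯ = x₀^{n−1} = k/(a+1) and x₀ⁿ = (a−n+2)·k/(a+1) = k/(b+1) satisfies x₀¹ + ⋯ + x₀ⁿ = k and f(x₀) = 0; hence x₀ is a global minimizer of the constrained extremum problem min f over the hyperplane {x ∈ ℝⁿ : x¹+⋯+xⁿ = k}. -/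
/-!
Adding the square of `∑ xⁱ` to the form cancels every cross term, so `f x = ∑ wᵢ (xⁱ)² - (∑ xⁱ)²`
with `wᵢ = a + 1` for `i < n` and `wₙ = b + 1`. The relation between `a` and `b` says precisely that
`∑ wᵢ⁻¹ = 1`, so Cauchy–Schwarz gives `(∑ xⁱ)² ≤ (∑ wᵢ⁻¹) (∑ wᵢ (xⁱ)²) = ∑ wᵢ (xⁱ)²`, that is,
`0 ≤ f` on the whole space. Equality holds when `x` is proportional to `w⁻¹`, and scaling `w⁻¹` to
have sum `k` yields `x₀`.
-/

section WeightedSquares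

variable {ι K : Type*}

theorem sum_sq_eq_sum_sq_add_two_mul_sum_lt [LinearOrder ι] [CommSemiring K] (s : Finset ι)
    (x : ι → K) :
    (∑ i ∈ s, x i) ^ 2 =
      ∑ i ∈ s, x i ^ 2 + 2 * ∑ i ∈ s, ∑ j ∈ s, if i < j then x i * x j else 0 := by
  have trichotomy (i j : ι) : x i * x j =
      (if i = j then x i ^ 2 else 0) +
        ((if i < j then x i * x j else 0) + if j < i then x j * x i else 0) := by
    rcases lt_trichotomy i j with h | rfl | h
    · simp [h, h.ne, h.not_gt]
    · simp [sq]
    · simp [h, h.ne', h.not_gt, mul_comm]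
  have diagonal : ∑ i ∈ s, ∑ j ∈ s, (if i = j then x i ^ 2 else 0) = ∑ i ∈ s, x i ^ 2 :=
    Finset.sum_congr rfl fun i hi => by simp [hi]
  have below_eq_above : ∑ i ∈ s, ∑ j ∈ s, (if j < i then x j * x i else 0) =
      ∑ i ∈ s, ∑ j ∈ s, if i < j then x i * x j else 0 := Finset.sum_comm
  calc (∑ i ∈ s, x i) ^ 2
      = ∑ i ∈ s, ∑ j ∈ s, x i * x j := by rw [sq, Finset.sum_mul_sum]
    _ = ∑ i ∈ s, ∑ j ∈ s, ((if i = j then x i ^ 2 else 0) +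
          ((if i < j then x i * x j else 0) + if j < i then x j * x i else 0)) :=
        Finset.sum_congr rfl fun i _ => Finset.sum_congr rfl fun j _ => trichotomy i j
    _ = _ := by simp only [Finset.sum_add_distrib, diagonal, below_eq_above, two_mul]

theorem sq_sum_le_sum_inv_mul_sum_mul_sq [Field K] [LinearOrder K] [IsStrictOrderedRing K]
    (s : Finset ι) {w : ι → K} (hw : ∀ i ∈ s, 0 < w i) (x : ι → K) :
    (∑ i ∈ s, x i) ^ 2 ≤ (∑ i ∈ s, (w i)⁻¹) * ∑ i ∈ s, w i * x i ^ 2 :=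
  Finset.sum_sq_le_sum_mul_sum_of_sq_le_mul s (fun i hi => (inv_pos.2 (hw i hi)).le)
    (fun i hi => mul_nonneg (hw i hi).le (sq_nonneg _))
    fun i hi => (inv_mul_cancel_left₀ (hw i hi).ne' _).ge

variable [Fintype ι]

/-- The quadratic form `∑ wᵢ xᵢ² - (∑ xᵢ)²`, a diagonal form minus the square of the sum of the
coordinates. The form `f` of the theorem is of this shape, which makes Cauchy–Schwarz applicable. -/
def diagSubSqSum [CommRing K] (w x : ι → K) : K :=
  ∑ i, w i * x i ^ 2 - (∑ i, x i) ^ 2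

theorem diagSubSqSum_nonneg [Field K] [LinearOrder K] [IsStrictOrderedRing K] {w : ι → K}
    (hw : ∀ i, 0 < w i) (hinv : ∑ i, (w i)⁻¹ ≤ 1) (x : ι → K) : 0 ≤ diagSubSqSum w x := by
  have energy_nonneg : 0 ≤ ∑ i, w i * x i ^ 2 :=
    Finset.sum_nonneg fun i _ => mul_nonneg (hw i).le (sq_nonneg _)
  exact sub_nonneg.2 <|
    (sq_sum_le_sum_inv_mul_sum_mul_sq _ (fun i _ => hw i) x).trans
      (mul_le_of_le_one_left energy_nonneg hinv)

theorem sum_const_div_eq_mul_sum_inv [DivisionRing K] (w : ι → K) (k : K) :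
    ∑ i, k / w i = k * ∑ i, (w i)⁻¹ := by
  simp only [div_eq_mul_inv, Finset.mul_sum]

theorem diagSubSqSum_const_div [Field K] {w : ι → K} (hw : ∀ i, w i ≠ 0) (k : K) :
    diagSubSqSum w (fun i => k / w i) =
      k ^ 2 * (∑ i, (w i)⁻¹) * (1 - ∑ i, (w i)⁻¹) := by
  have energy : ∑ i, w i * (k / w i) ^ 2 = k ^ 2 * ∑ i, (w i)⁻¹ := by
    rw [Finset.mul_sum]
    refine Finset.sum_congr rfl fun i _ => ?_
    have := hw i
    field_simp
  rw [diagSubSqSum, energy, sum_const_div_eq_mul_sum_inv]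
  ring

end WeightedSquares

section LastCoordinate

variable {n : ℕ}

theorem sum_univ_eq_sum_lt_pred_add_last {M : Type*} [AddCommMonoid M] (hn : 0 < n)
    (g : Fin n → M) :
    ∑ i, g i =
      ∑ i ∈ Finset.univ.filter (fun i : Fin n => (i : ℕ) < n - 1), g i +
        g ⟨n - 1, Nat.sub_one_lt_of_lt hn⟩ := by
  obtain ⟨m, rfl⟩ := Nat.exists_eq_add_one.2 hn
  simp [Finset.sum_filter, Fin.sum_univ_castSucc, Fin.last]

variable {K : Type*}

/-- The weights `(a + 1, …, a + 1, b + 1)` that bring the form of the theorem to the shape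
`diagSubSqSum`. -/
def lastDistinguishedWeight [Add K] [One K] (a b : K) (i : Fin n) : K :=
  if (i : ℕ) < n - 1 then a + 1 else b + 1

theorem diagSubSqSum_lastDistinguishedWeight [CommRing K] (hn : 0 < n) (a b : K) (x : Fin n → K) :
    diagSubSqSum (lastDistinguishedWeight a b) x =
      a * ∑ i ∈ Finset.univ.filter (fun i : Fin n => (i : ℕ) < n - 1), x i ^ 2
        + b * x ⟨n - 1, Nat.sub_one_lt_of_lt hn⟩ ^ 2
        - 2 * ∑ i : Fin n, ∑ j : Fin n, if i < j then x i * x j else 0 := by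
  have weighted : ∑ i ∈ Finset.univ.filter (fun i : Fin n => (i : ℕ) < n - 1),
      lastDistinguishedWeight a b i * x i ^ 2 =
      (a + 1) * ∑ i ∈ Finset.univ.filter (fun i : Fin n => (i : ℕ) < n - 1), x i ^ 2 := by
    rw [Finset.mul_sum]
    exact Finset.sum_congr rfl fun i hi => by
      rw [lastDistinguishedWeight, if_pos (Finset.mem_filter.1 hi).2]
  rw [diagSubSqSum, sum_sq_eq_sum_sq_add_two_mul_sum_lt, sum_univ_eq_sum_lt_pred_add_last hn,
    weighted, sum_univ_eq_sum_lt_pred_add_last hn (fun i => x i ^ 2), lastDistinguishedWeight,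
    if_neg (lt_irrefl _)]
  ring

theorem sum_inv_lastDistinguishedWeight [Field K] (hn : 0 < n) (a b : K) :
    ∑ i : Fin n, (lastDistinguishedWeight a b i)⁻¹ = ((n : K) - 1) / (a + 1) + 1 / (b + 1) := by
  obtain ⟨m, rfl⟩ := Nat.exists_eq_add_one.2 hn
  simp [lastDistinguishedWeight, Fin.sum_univ_castSucc, div_eq_mul_inv]

theorem sub_one_div_add_one_eq [Field K] {a c : K} (hgap : a - c + 2 ≠ 0) :
    (c - 1) / (a - c + 2) + 1 = (a + 1) / (a - c + 2) := by
  rw [div_add_one hgap]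
  ring

theorem sum_inv_lastDistinguishedWeight_eq_one [Field K] (hn : 0 < n) {a : K} (ha : a + 1 ≠ 0)
    (hgap : a - n + 2 ≠ 0) :
    ∑ i : Fin n, (lastDistinguishedWeight a (((n : K) - 1) / (a - n + 2)) i)⁻¹ = 1 := by
  rw [sum_inv_lastDistinguishedWeight hn, sub_one_div_add_one_eq hgap, one_div_div, ← add_div,
    div_eq_one_iff_eq ha]
  ring

theorem div_lastDistinguishedWeight [DivisionRing K] (k a b : K) (i : Fin n) :
    k / lastDistinguishedWeight a b i =
      if (i : ℕ) < n - 1 then k / (a + 1) else k / (b + 1) :=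
  apply_ite (k / ·) _ _ _

theorem lastDistinguishedWeight_pos [Add K] [Zero K] [One K] [LT K] {a b : K} (ha : 0 < a + 1)
    (hb : 0 < b + 1) (i : Fin n) : 0 < lastDistinguishedWeight a b i := by
  unfold lastDistinguishedWeight
  split_ifs <;> assumption

end LastCoordinate

theorem quadratic_form_global_minimizer_general
    {K : Type*} [Field K] [LinearOrder K] [IsStrictOrderedRing K]
    (n : ℕ) (hn : 0 < n) (a b k : K) (ha : (n : K) - 2 < a)
    (hb : b = ((n : K) - 1) / (a - (n : K) + 2))
    (f : (Fin n → K) → K)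
    (hf : ∀ x : Fin n → K,
      f x = a * ∑ i ∈ Finset.univ.filter (fun i : Fin n => (i : ℕ) < n - 1), (x i) ^ 2
          + b * (x ⟨n - 1, by omega⟩) ^ 2
          - 2 * ∑ i : Fin n, ∑ j : Fin n, if i < j then x i * x j else 0)
    (x₀ : Fin n → K)
    (hx₀ : ∀ i : Fin n, x₀ i =
      if (i : ℕ) < n - 1 then k / (a + 1) else (a - (n : K) + 2) * k / (a + 1)) :
    (a - (n : K) + 2) * k / (a + 1) = k / (b + 1) ∧
    (∑ i : Fin n, x₀ i = k) ∧
    f x₀ = 0 ∧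
    (∀ x : Fin n → K, f x₀ ≤ f x) := by
  have one_le_n : (1 : K) ≤ n := Nat.one_le_cast.2 hn
  have gap_pos : 0 < a - n + 2 := by linarith
  have a_add_one_pos : 0 < a + 1 := by linarith
  have b_add_one_eq : b + 1 = (a + 1) / (a - n + 2) := hb ▸ sub_one_div_add_one_eq gap_pos.ne'
  have b_add_one_pos : 0 < b + 1 := b_add_one_eq ▸ div_pos a_add_one_pos gap_pos
  have last_eq : (a - (n : K) + 2) * k / (a + 1) = k / (b + 1) := by
    rw [b_add_one_eq, div_div_eq_mul_div, mul_comm]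
  let w : Fin n → K := lastDistinguishedWeight a b
  have w_pos : ∀ i, 0 < w i := lastDistinguishedWeight_pos a_add_one_pos b_add_one_pos
  have sum_inv_w : ∑ i, (w i)⁻¹ = 1 := by
    simpa only [w, hb] using
      sum_inv_lastDistinguishedWeight_eq_one hn a_add_one_pos.ne' gap_pos.ne'
  have f_eq (x : Fin n → K) : f x = diagSubSqSum w x :=
    (hf x).trans (diagSubSqSum_lastDistinguishedWeight hn a b x).symm
  have x₀_eq : x₀ = fun i => k / w i :=
    funext fun i => by rw [hx₀, last_eq, div_lastDistinguishedWeight]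
  have f_x₀ : f x₀ = 0 := by
    rw [f_eq, x₀_eq, diagSubSqSum_const_div fun i => (w_pos i).ne', sum_inv_w, sub_self, mul_zero]
  refine ⟨last_eq, ?_, f_x₀, fun x => ?_⟩
  · rw [x₀_eq, sum_const_div_eq_mul_sum_inv, sum_inv_w, mul_one]
  · rw [f_x₀, f_eq]
    exact diagSubSqSum_nonneg w_pos sum_inv_w.le x

/-- For `a > n − 2`, `b = (n−1)/(a−n+2)`, the point
`x₀ = (k/(a+1), …, k/(a+1), (a−n+2)k/(a+1))` lies on the hyperplane `{Σ xⁱ = k}`,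
its last coordinate also equals `k/(b+1)`, it satisfies `f(x₀) = 0`, and it is a
global minimizer of `f` over the hyperplane. -/
theorem quadratic_form_global_minimizer
    (n : ℕ) (hn : 2 ≤ n) (a b k : ℝ) (ha : (n : ℝ) - 2 < a)
    (hb : b = ((n : ℝ) - 1) / (a - (n : ℝ) + 2))
    (f : (Fin n → ℝ) → ℝ)
    (hf : ∀ x : Fin n → ℝ,
      f x = a * ∑ i ∈ Finset.univ.filter (fun i : Fin n => (i : ℕ) < n - 1), (x i) ^ 2
          + b * (x ⟨n - 1, by omega⟩) ^ 2
          - 2 * ∑ i : Fin n, ∑ j : Fin n, if i < j then x i * x j else 0)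
    (x₀ : Fin n → ℝ)
    (hx₀ : ∀ i : Fin n, x₀ i =
      if (i : ℕ) < n - 1 then k / (a + 1) else (a - (n : ℝ) + 2) * k / (a + 1)) :
    (a - (n : ℝ) + 2) * k / (a + 1) = k / (b + 1) ∧
    (∑ i : Fin n, x₀ i = k) ∧
    f x₀ = 0 ∧
    (∀ x : Fin n → ℝ, (∑ i : Fin n, x i = k) → f x₀ ≤ f x) := by
  have ⟨last_eq, sum_eq, f_eq, le⟩ :=
    quadratic_form_global_minimizer_general n (by omega) a b k ha hb f hf x₀ hx₀
  exact ⟨last_eq, sum_eq, f_eq, fun x _ => le x⟩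
end

section
/- Let n ≥ 2 be an integer, a > n − 2 a real number, b = (n−1)/(a−n+2), k ∈ ℝ, and f(x¹,…,xⁿ) = a Σ_{i=1}^{n−1} (xⁱ)² + b (xⁿ)² − 2 Σ_{1≤i<j≤n} xⁱ xʲ. Then for x ∈ ℝⁿ with x¹ + ⋯ + xⁿ = k, one has f(x) = 0 if and only if x¹ = x² = ⋯ = x^{n−1} = k/(a+1) and xⁿ = (a−n+2)·k/(a+1). -/
/-!
The cross terms are `2 ∑_{i<j} xᵢxⱼ = (∑ xᵢ)² - ∑ xᵢ²`, so
`f(x) = (a + 1) ∑_{i<n} xᵢ² + (b + 1) xₙ² - (∑ xᵢ)²`. The value of `b` is the one for which the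
reciprocals `wᵢ` of these coefficients add up to `1`; then `f(x) = ∑ xᵢ²/wᵢ - (∑ xᵢ)²/∑ wᵢ` is the
defect in Sedrakyan's form of the Cauchy-Schwarz inequality, a sum of squares that vanishes exactly
when `x` is proportional to `w`.
-/

open Finset

theorem sq_sum_eq_sum_sq_add_two_mul_sum_sum_lt {ι R : Type*} [LinearOrder ι] [CommSemiring R]
    (s : Finset ι) (x : ι → R) :
    (∑ i ∈ s, x i) ^ 2 =
      ∑ i ∈ s, x i ^ 2 + 2 * ∑ i ∈ s, ∑ j ∈ s, if i < j then x i * x j else 0 := by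
  have trichotomy (i j : ι) : x i * x j = (if i = j then x i * x j else 0) +
      (if i < j then x i * x j else 0) + (if j < i then x j * x i else 0) := by
    rcases lt_trichotomy i j with h | rfl | h
    · simp [h, h.ne, h.not_gt]
    · simp
    · simp [h, h.ne', h.not_gt, mul_comm]
  have diagonal : ∑ i ∈ s, ∑ j ∈ s, (if i = j then x i * x j else 0) = ∑ i ∈ s, x i ^ 2 :=
    sum_congr rfl fun i hi => by rw [sum_ite_eq, if_pos hi, sq]
  have swap : ∑ i ∈ s, ∑ j ∈ s, (if j < i then x j * x i else 0) =
      ∑ i ∈ s, ∑ j ∈ s, if i < j then x i * x j else 0 := sum_comm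
  calc (∑ i ∈ s, x i) ^ 2 = ∑ i ∈ s, ∑ j ∈ s, x i * x j := by rw [sq, sum_mul_sum]
    _ = ∑ i ∈ s, ∑ j ∈ s, ((if i = j then x i * x j else 0) +
          (if i < j then x i * x j else 0) + (if j < i then x j * x i else 0)) :=
      sum_congr rfl fun i _ => sum_congr rfl fun j _ => trichotomy i j
    _ = ∑ i ∈ s, x i ^ 2 + 2 * ∑ i ∈ s, ∑ j ∈ s, if i < j then x i * x j else 0 := by
      simp only [sum_add_distrib, diagonal, swap, two_mul, add_assoc]

theorem sum_sq_div_sub_sq_sum_div_sum {ι K : Type*} [Field K] (s : Finset ι) (x : ι → K)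
    {w : ι → K} (hw : ∀ i ∈ s, w i ≠ 0) (hs : ∑ i ∈ s, w i ≠ 0) :
    ∑ i ∈ s, x i ^ 2 / w i - (∑ i ∈ s, x i) ^ 2 / ∑ i ∈ s, w i =
      ∑ i ∈ s, (x i - w i * ((∑ j ∈ s, x j) / ∑ j ∈ s, w j)) ^ 2 / w i := by
  set t := (∑ j ∈ s, x j) / ∑ j ∈ s, w j with ht
  have expand : ∀ i ∈ s, (x i - w i * t) ^ 2 / w i = x i ^ 2 / w i - 2 * t * x i + t ^ 2 * w i :=
    fun i hi => by have := hw i hi; field_simp; ring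
  rw [sum_congr rfl expand, sum_add_distrib, sum_sub_distrib, ← mul_sum, ← mul_sum, ht]
  field_simp
  ring

theorem sum_sq_div_eq_sq_sum_div_sum_iff {ι K : Type*} [Field K] [LinearOrder K]
    [IsStrictOrderedRing K] (s : Finset ι) (x : ι → K) {w : ι → K} (hw : ∀ i ∈ s, 0 < w i) :
    ∑ i ∈ s, x i ^ 2 / w i = (∑ i ∈ s, x i) ^ 2 / ∑ i ∈ s, w i ↔
      ∀ i ∈ s, x i = w i * ((∑ j ∈ s, x j) / ∑ j ∈ s, w j) := by
  rcases s.eq_empty_or_nonempty with rfl | hs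
  · simp
  have nonneg : ∀ i ∈ s, 0 ≤ (x i - w i * ((∑ j ∈ s, x j) / ∑ j ∈ s, w j)) ^ 2 / w i :=
    fun i hi => div_nonneg (sq_nonneg _) (hw i hi).le
  rw [← sub_eq_zero, sum_sq_div_sub_sq_sum_div_sum s x (fun i hi => (hw i hi).ne')
    (sum_pos hw hs).ne', sum_eq_zero_iff_of_nonneg nonneg]
  refine forall₂_congr fun i hi => ?_
  rw [div_eq_zero_iff, or_iff_left (hw i hi).ne', sq_eq_zero_iff, sub_eq_zero]

/-- The weights, of sum `1`, equal to `1 / (a + 1)` off `ℓ` and to `(a - n + 2) / (a + 1)` at `ℓ`,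
where `n` is the cardinality of `ι` and `ℓ` plays the role of the last index. They are the
reciprocals of the diagonal coefficients of `f(x) + (∑ xᵢ)²`, and they span the line on which `f`
vanishes. -/
def zeroWeight {ι K : Type*} [Fintype ι] [DecidableEq ι] [Field K] (a : K) (ℓ : ι) : ι → K :=
  Function.update (fun _ => 1 / (a + 1)) ℓ ((a - Fintype.card ι + 2) / (a + 1))

namespace zeroWeight

section Field

variable {ι K : Type*} [Fintype ι] [DecidableEq ι] [Field K] (a : K) {ℓ : ι}

theorem apply_self : zeroWeight a ℓ ℓ = (a - Fintype.card ι + 2) / (a + 1) :=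
  Function.update_self ..

theorem apply_of_ne {i : ι} (h : i ≠ ℓ) : zeroWeight a ℓ i = 1 / (a + 1) :=
  Function.update_of_ne h ..

theorem forall_eq_mul_iff (ℓ : ι) (x : ι → K) (k : K) :
    (∀ i, x i = zeroWeight a ℓ i * k) ↔
      (∀ i, i ≠ ℓ → x i = k / (a + 1)) ∧ x ℓ = (a - Fintype.card ι + 2) * k / (a + 1) := by
  have off_ℓ {i : ι} (h : i ≠ ℓ) : zeroWeight a ℓ i * k = k / (a + 1) := by
    rw [apply_of_ne a h, one_div_mul_eq_div]
  have at_ℓ : zeroWeight a ℓ ℓ * k = (a - Fintype.card ι + 2) * k / (a + 1) := by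
    rw [apply_self, div_mul_eq_mul_div]
  refine ⟨fun h => ⟨fun i hi => (h i).trans (off_ℓ hi), (h ℓ).trans at_ℓ⟩, ?_⟩
  rintro ⟨h_off, h_at⟩ i
  rcases eq_or_ne i ℓ with rfl | hi
  · exact h_at.trans at_ℓ.symm
  · exact (h_off i hi).trans (off_ℓ hi).symm

theorem sum_eq_one {a : K} (ha : a + 1 ≠ 0) (ℓ : ι) : ∑ i, zeroWeight a ℓ i = 1 := by
  have card_compl : ((#(univ \ {ℓ}) : ℕ) : K) = Fintype.card ι - 1 := by
    rw [← compl_eq_univ_sdiff, card_compl, card_singleton,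
      Nat.cast_pred (Fintype.card_pos_iff.mpr ⟨ℓ⟩)]
  rw [zeroWeight, sum_update_of_mem (mem_univ ℓ), sum_const, nsmul_eq_mul, card_compl]
  field_simp
  ring

theorem sum_sq_div (ha : a - Fintype.card ι + 2 ≠ 0) (ℓ : ι) (x : ι → K) :
    ∑ i, x i ^ 2 / zeroWeight a ℓ i = a * ∑ i with i ≠ ℓ, x i ^ 2 +
      (Fintype.card ι - 1) / (a - Fintype.card ι + 2) * x ℓ ^ 2 + ∑ i, x i ^ 2 := by
  have off_ℓ : ∑ i with i ≠ ℓ, x i ^ 2 / zeroWeight a ℓ i = (a + 1) * ∑ i with i ≠ ℓ, x i ^ 2 := by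
    rw [mul_sum]
    refine sum_congr rfl fun i hi => ?_
    rw [apply_of_ne a (mem_filter.mp hi).2, div_div_eq_mul_div, div_one, mul_comm]
  have split (y : ι → K) : ∑ i, y i = ∑ i with i ≠ ℓ, y i + y ℓ := by
    rw [filter_ne', sum_erase_add _ _ (mem_univ ℓ)]
  rw [split, off_ℓ, apply_self, split fun i => x i ^ 2]
  field_simp
  ring

end Field

theorem pos {ι K : Type*} [Fintype ι] [DecidableEq ι] [Field K] [LinearOrder K]
    [IsStrictOrderedRing K] {a : K} (ha₁ : 0 < a + 1) (ha : 0 < a - Fintype.card ι + 2) (ℓ i : ι) :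
    0 < zeroWeight a ℓ i := by
  rcases eq_or_ne i ℓ with rfl | h
  · rw [apply_self]
    positivity
  · rw [apply_of_ne a h]
    positivity

end zeroWeight

theorem quadratic_form_zero_iff_general {ι K : Type*} [Fintype ι] [LinearOrder ι] [Field K]
    [LinearOrder K] [IsStrictOrderedRing K] {a : K} (ha : (Fintype.card ι : K) - 2 < a) (ℓ : ι)
    (x : ι → K) :
    a * ∑ i with i ≠ ℓ, x i ^ 2 + (Fintype.card ι - 1) / (a - Fintype.card ι + 2) * x ℓ ^ 2
        - 2 * ∑ i, ∑ j, (if i < j then x i * x j else 0) = 0 ↔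
      (∀ i, i ≠ ℓ → x i = (∑ j, x j) / (a + 1)) ∧
        x ℓ = (a - Fintype.card ι + 2) * (∑ j, x j) / (a + 1) := by
  have hd : 0 < a - Fintype.card ι + 2 := by linarith
  have ha₁ : 0 < a + 1 := by
    have : (1 : K) ≤ Fintype.card ι := by exact_mod_cast Fintype.card_pos_iff.mpr ⟨ℓ⟩
    linarith
  have form_eq : a * ∑ i with i ≠ ℓ, x i ^ 2
      + (Fintype.card ι - 1) / (a - Fintype.card ι + 2) * x ℓ ^ 2
      - 2 * ∑ i, ∑ j, (if i < j then x i * x j else 0) =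
      ∑ i, x i ^ 2 / zeroWeight a ℓ i - (∑ i, x i) ^ 2 / ∑ i, zeroWeight a ℓ i := by
    rw [zeroWeight.sum_sq_div a hd.ne', zeroWeight.sum_eq_one ha₁.ne', div_one,
      sq_sum_eq_sum_sq_add_two_mul_sum_sum_lt]
    ring
  rw [form_eq, sub_eq_zero,
    sum_sq_div_eq_sq_sum_div_sum_iff univ x fun i _ => zeroWeight.pos ha₁ hd ℓ i,
    zeroWeight.sum_eq_one ha₁.ne', div_one]
  simpa only [mem_univ, true_imp_iff] using zeroWeight.forall_eq_mul_iff a ℓ x _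

theorem val_lt_pred_iff_ne_last {n : ℕ} (hn : 0 < n) (i : Fin n) :
    (i : ℕ) < n - 1 ↔ i ≠ ⟨n - 1, Nat.sub_one_lt_of_lt hn⟩ := by
  simp only [ne_eq, Fin.ext_iff]
  omega

/-- For `a > n − 2`, `b = (n−1)/(a−n+2)` and `x` on the hyperplane
`{Σ xⁱ = k}`, one has `f(x) = 0` iff `x¹ = ⋯ = x^{n−1} = k/(a+1)` and
`xⁿ = (a−n+2)k/(a+1)`. -/
theorem quadratic_form_zero_iff
    (n : ℕ) (hn : 2 ≤ n) (a b k : ℝ) (ha : (n : ℝ) - 2 < a)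
    (hb : b = ((n : ℝ) - 1) / (a - (n : ℝ) + 2))
    (f : (Fin n → ℝ) → ℝ)
    (hf : ∀ x : Fin n → ℝ,
      f x = a * ∑ i ∈ Finset.univ.filter (fun i : Fin n => (i : ℕ) < n - 1), (x i) ^ 2
          + b * (x ⟨n - 1, by omega⟩) ^ 2
          - 2 * ∑ i : Fin n, ∑ j : Fin n, if i < j then x i * x j else 0)
    (x : Fin n → ℝ) (hx : ∑ i : Fin n, x i = k) :
    f x = 0 ↔
      ((∀ i : Fin n, (i : ℕ) < n - 1 → x i = k / (a + 1)) ∧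
        x ⟨n - 1, by omega⟩ = (a - (n : ℝ) + 2) * k / (a + 1)) := by
  subst hb hx
  simpa only [hf, val_lt_pred_iff_ne_last (by omega : 0 < n), Fintype.card_fin] using
    quadratic_form_zero_iff_general (by rwa [Fintype.card_fin]) ⟨n - 1, by omega⟩ x
end

section
/- Let n ≥ 2 be an integer, r > 0 a real number, and set a(r) = (n−1)(n+r)(n²−n−r)/(nr). Let W be a real inner product space and let ζ_{ij} ∈ W for i,j ∈ {1,…,n} satisfy ζ_{ij} = ζ_{ji}. Then ((n+r)/n) Σ_{i,j=1}^n ‖ζ_{ij}‖² + (a(r)/(n−1)) Σ_{i,j=1}^{n−1} ‖ζ_{ij}‖² ≥ ‖Σ_{i=1}^n ζ_{ii}‖². -/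
/-!
Split the trace as `S + z`, where `z = ζ k k` is the removed diagonal entry, `m` is the number of
remaining indices and `Q` is the sum of `‖ζ i j‖ ^ 2` over the remaining block. For Hölder conjugate
`p, q`, the weighted Young inequality and then Cauchy–Schwarz give
`‖S + z‖ ^ 2 ≤ p * ‖S‖ ^ 2 + q * ‖z‖ ^ 2 ≤ p * m * Q + q * ‖z‖ ^ 2`.
Since `Q + ‖z‖ ^ 2` is at most the full sum `T`, this is bounded by `q * T + (p * m - q) * Q`.
The choice `p = (n + r) / r`, `q = (n + r) / n` with `m = n - 1` produces the stated coefficients.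
-/

open Finset

section OrderedSums

variable {ι M : Type*} [AddCommMonoid M] [PartialOrder M] [IsOrderedAddMonoid M]
  {s : Finset ι} {f : ι → ι → M}

lemma sum_diag_le_sum_sum (hf : ∀ i ∈ s, ∀ j ∈ s, 0 ≤ f i j) :
    ∑ i ∈ s, f i i ≤ ∑ i ∈ s, ∑ j ∈ s, f i j :=
  sum_le_sum fun i hi ↦ single_le_sum (hf i hi) hi

lemma sum_sum_erase_add_le_sum_sum [DecidableEq ι] {k : ι} (hk : k ∈ s)
    (hf : ∀ i ∈ s, ∀ j ∈ s, 0 ≤ f i j) :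
    ∑ i ∈ s.erase k, ∑ j ∈ s.erase k, f i j + f k k ≤ ∑ i ∈ s, ∑ j ∈ s, f i j := by
  rw [← sum_erase_add s (fun i ↦ ∑ j ∈ s, f i j) hk]
  refine add_le_add (sum_le_sum fun i hi ↦ ?_) (single_le_sum (hf k hk) hk)
  exact sum_le_sum_of_subset_of_nonneg (erase_subset k s)
    fun j hj _ ↦ hf i (mem_of_mem_erase hi) j hj

end OrderedSums

lemma filter_val_lt_sub_one_eq_erase {n : ℕ} {k : Fin n} (hk : (k : ℕ) = n - 1) :
    univ.filter (fun i : Fin n ↦ (i : ℕ) < n - 1) = univ.erase k := by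
  ext i
  simp only [mem_filter, mem_univ, true_and, mem_erase, and_true, ne_eq, Fin.ext_iff]
  omega

lemma holderConjugate_add_div_add_div {a b : ℝ} (ha : 0 < a) (hb : 0 < b) :
    ((a + b) / a).HolderConjugate ((a + b) / b) := by
  simpa only [inv_div] using Real.HolderConjugate.inv_inv (a := a / (a + b)) (b := b / (a + b))
    (by positivity) (by positivity) (by field_simp)

lemma casorati_coeff_div_eq {K : Type*} [Field K] {n r : K} (hn : n ≠ 0) (hn' : n - 1 ≠ 0)
    (hr : r ≠ 0) :
    (n - 1) * (n + r) * (n ^ 2 - n - r) / (n * r) / (n - 1) =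
      (n + r) / r * (n - 1) - (n + r) / n := by
  field_simp

section Norm

variable {ι E : Type*} [SeminormedAddCommGroup E] {p q : ℝ}

lemma norm_add_sq_le_of_holderConjugate (hpq : p.HolderConjugate q) (x y : E) :
    ‖x + y‖ ^ 2 ≤ p * ‖x‖ ^ 2 + q * ‖y‖ ^ 2 := by
  have inv_sub_one : (p - 1)⁻¹ = q - 1 :=
    inv_eq_of_mul_eq_one_right (by linear_combination hpq.mul_eq_add)
  have young : 2 * ‖x‖ * ‖y‖ ≤ (p - 1) * ‖x‖ ^ 2 + (q - 1) * ‖y‖ ^ 2 :=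
    inv_sub_one ▸ two_mul_le_add_mul_sq hpq.sub_one_pos
  calc ‖x + y‖ ^ 2 ≤ (‖x‖ + ‖y‖) ^ 2 := by gcongr; exact norm_add_le x y
    _ = ‖x‖ ^ 2 + 2 * ‖x‖ * ‖y‖ + ‖y‖ ^ 2 := add_sq ‖x‖ ‖y‖
    _ ≤ p * ‖x‖ ^ 2 + q * ‖y‖ ^ 2 := by linarith

lemma norm_sum_sq_le_card_mul_sum_norm_sq (s : Finset ι) (v : ι → E) :
    ‖∑ i ∈ s, v i‖ ^ 2 ≤ #s * ∑ i ∈ s, ‖v i‖ ^ 2 :=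
  calc ‖∑ i ∈ s, v i‖ ^ 2 ≤ (∑ i ∈ s, ‖v i‖) ^ 2 := by gcongr; exact norm_sum_le s v
    _ ≤ #s * ∑ i ∈ s, ‖v i‖ ^ 2 := sq_sum_le_card_mul_sum_sq

lemma norm_sum_diag_sq_le_card_mul_sum_sum (s : Finset ι) (ζ : ι → ι → E) :
    ‖∑ i ∈ s, ζ i i‖ ^ 2 ≤ #s * ∑ i ∈ s, ∑ j ∈ s, ‖ζ i j‖ ^ 2 :=
  calc ‖∑ i ∈ s, ζ i i‖ ^ 2 ≤ #s * ∑ i ∈ s, ‖ζ i i‖ ^ 2 :=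
      norm_sum_sq_le_card_mul_sum_norm_sq s fun i ↦ ζ i i
    _ ≤ #s * ∑ i ∈ s, ∑ j ∈ s, ‖ζ i j‖ ^ 2 :=
      mul_le_mul_of_nonneg_left
        (sum_diag_le_sum_sum (f := fun i j ↦ ‖ζ i j‖ ^ 2) fun i _ j _ ↦ sq_nonneg ‖ζ i j‖)
        (Nat.cast_nonneg #s)

variable [DecidableEq ι]

lemma norm_sum_diag_sq_le_of_holderConjugate (hpq : p.HolderConjugate q) {s : Finset ι} {k : ι}
    (hk : k ∈ s) (ζ : ι → ι → E) :
    ‖∑ i ∈ s, ζ i i‖ ^ 2 ≤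
      q * ∑ i ∈ s, ∑ j ∈ s, ‖ζ i j‖ ^ 2 +
        (p * #(s.erase k) - q) * ∑ i ∈ s.erase k, ∑ j ∈ s.erase k, ‖ζ i j‖ ^ 2 := by
  have hp : 0 ≤ p := hpq.nonneg
  have hq : 0 ≤ q := hpq.symm.nonneg
  set Q := ∑ i ∈ s.erase k, ∑ j ∈ s.erase k, ‖ζ i j‖ ^ 2
  set T := ∑ i ∈ s, ∑ j ∈ s, ‖ζ i j‖ ^ 2
  have block_add_diag_le : Q + ‖ζ k k‖ ^ 2 ≤ T :=
    sum_sum_erase_add_le_sum_sum (f := fun i j ↦ ‖ζ i j‖ ^ 2) hk fun i _ j _ ↦ sq_nonneg ‖ζ i j‖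
  calc ‖∑ i ∈ s, ζ i i‖ ^ 2
      = ‖∑ i ∈ s.erase k, ζ i i + ζ k k‖ ^ 2 := by rw [sum_erase_add s (fun i ↦ ζ i i) hk]
    _ ≤ p * ‖∑ i ∈ s.erase k, ζ i i‖ ^ 2 + q * ‖ζ k k‖ ^ 2 :=
      norm_add_sq_le_of_holderConjugate hpq _ _
    _ ≤ p * (#(s.erase k) * Q) + q * ‖ζ k k‖ ^ 2 := by
      gcongr
      exact norm_sum_diag_sq_le_card_mul_sum_sum (s.erase k) ζ
    _ = q * (Q + ‖ζ k k‖ ^ 2) + (p * #(s.erase k) - q) * Q := by ring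
    _ ≤ q * T + (p * #(s.erase k) - q) * Q := by gcongr

theorem casorati_vector_inequality_general {n : ℕ} (hn : 2 ≤ n) {r : ℝ} (hr : 0 < r)
    {s : Finset ι} (hs : #s = n) {k : ι} (hk : k ∈ s) (ζ : ι → ι → E) :
    ‖∑ i ∈ s, ζ i i‖ ^ 2 ≤
      (n + r) / n * ∑ i ∈ s, ∑ j ∈ s, ‖ζ i j‖ ^ 2 +
        (n - 1) * (n + r) * (n ^ 2 - n - r) / (n * r) / (n - 1) *
          ∑ i ∈ s.erase k, ∑ j ∈ s.erase k, ‖ζ i j‖ ^ 2 := by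
  have one_lt : (1 : ℝ) < n := by exact_mod_cast hn
  have n_pos : (0 : ℝ) < n := by linarith
  have card_erase : (#(s.erase k) : ℝ) = n - 1 := by rw [cast_card_erase_of_mem hk, hs]
  have conj : ((n + r) / r).HolderConjugate ((n + r) / n) :=
    add_comm r n ▸ holderConjugate_add_div_add_div hr n_pos
  rw [casorati_coeff_div_eq n_pos.ne' (sub_pos.2 one_lt).ne' hr.ne', ← card_erase]
  exact norm_sum_diag_sq_le_of_holderConjugate conj hk ζ

end Norm

/-- For a symmetric array `(ζ_{ij})` of vectors in a real inner product
space and `a(r) = (n−1)(n+r)(n²−n−r)/(nr)`,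
`((n+r)/n) Σ_{i,j≤n} ‖ζ_{ij}‖² + (a(r)/(n−1)) Σ_{i,j≤n−1} ‖ζ_{ij}‖² ≥ ‖Σ_i ζ_{ii}‖²`. -/
theorem casorati_vector_inequality
    {W : Type*} [NormedAddCommGroup W] [InnerProductSpace ℝ W]
    (n : ℕ) (hn : 2 ≤ n) (r : ℝ) (hr : 0 < r)
    (ζ : Fin n → Fin n → W) (hζ : ∀ i j : Fin n, ζ i j = ζ j i) :
    ‖∑ i : Fin n, ζ i i‖ ^ 2 ≤
      (((n : ℝ) + r) / (n : ℝ)) * ∑ i : Fin n, ∑ j : Fin n, ‖ζ i j‖ ^ 2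
      + ((((n : ℝ) - 1) * ((n : ℝ) + r) * ((n : ℝ) ^ 2 - (n : ℝ) - r) / ((n : ℝ) * r))
            / ((n : ℝ) - 1)) *
          ∑ i ∈ Finset.univ.filter (fun i : Fin n => (i : ℕ) < n - 1),
            ∑ j ∈ Finset.univ.filter (fun j : Fin n => (j : ℕ) < n - 1),
              ‖ζ i j‖ ^ 2 := by
  rw [filter_val_lt_sub_one_eq_erase (k := ⟨n - 1, by omega⟩) rfl]
  exact casorati_vector_inequality_general hn hr (card_fin n) (mem_univ _) ζ
end

section
/- Let n ≥ 2 be an integer, r > 0 a real number, a(r) = (n−1)(n+r)(n²−n−r)/(nr), W a real inner product space, and ζ_{ij} ∈ W (i,j ∈ {1,…,n}) with ζ_{ij} = ζ_{ji}. Then equality ((n+r)/n) Σ_{i,j=1}^n ‖ζ_{ij}‖² + (a(r)/(n−1)) Σ_{i,j=1}^{n−1} ‖ζ_{ij}‖² = ‖Σ_{i=1}^n ζ_{ii}‖² holds if and only if ζ_{ij} = 0 for all i ≠ j and ζ_{11} = ζ_{22} = ⋯ = ζ_{n−1,n−1} = (r/(n(n−1))) ζ_{nn}. -/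
/-!
Collecting coefficients, the left-hand side is `∑ i, ∑ j, w i j * ‖ζ i j‖ ^ 2` with positive weights
`w`, and the coefficient `a(r)` is exactly the one for which `∑ i, (w i i)⁻¹ = 1`. For such weights,
`∑ i, w i i * ‖ζ i i‖ ^ 2 - ‖∑ i, ζ i i‖ ^ 2` is the weighted sum of squares of the distances from
`ζ i i` to `(w i i)⁻¹ • ∑ k, ζ k k`. Equality therefore kills every off-diagonal entry and makes all
the vectors `w i i • ζ i i` equal.
-/

open Finset

section WeightedSums

variable {ι W : Type*} [SeminormedAddCommGroup W] [InnerProductSpace ℝ W] {s : Finset ι}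
  {a : ι → ℝ}

theorem sum_mul_norm_sub_inv_smul_sum_sq (ha : ∀ i ∈ s, a i ≠ 0) (hs : ∑ i ∈ s, (a i)⁻¹ = 1)
    (v : ι → W) :
    ∑ i ∈ s, a i * ‖v i - (a i)⁻¹ • ∑ k ∈ s, v k‖ ^ 2 =
      ∑ i ∈ s, a i * ‖v i‖ ^ 2 - ‖∑ i ∈ s, v i‖ ^ 2 := by
  set T := ∑ k ∈ s, v k with hT
  have expand : ∀ i ∈ s, a i * ‖v i - (a i)⁻¹ • T‖ ^ 2 =
      a i * ‖v i‖ ^ 2 - 2 * inner ℝ (v i) T + (a i)⁻¹ * ‖T‖ ^ 2 := by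
    intro i hi
    have hai := ha i hi
    rw [norm_sub_sq_real, inner_smul_right, norm_smul, mul_pow, Real.norm_eq_abs, sq_abs]
    field_simp
  rw [sum_congr rfl expand, sum_add_distrib, sum_sub_distrib, ← mul_sum, ← sum_mul, hs,
    ← sum_inner, ← hT, real_inner_self_eq_norm_sq]
  ring

theorem norm_sum_sq_le_sum_mul_norm_sq (ha : ∀ i ∈ s, 0 < a i) (hs : ∑ i ∈ s, (a i)⁻¹ = 1)
    (v : ι → W) : ‖∑ i ∈ s, v i‖ ^ 2 ≤ ∑ i ∈ s, a i * ‖v i‖ ^ 2 := by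
  rw [← sub_nonneg, ← sum_mul_norm_sub_inv_smul_sum_sq (fun i hi ↦ (ha i hi).ne') hs]
  exact sum_nonneg fun i hi ↦ mul_nonneg (ha i hi).le (sq_nonneg _)

end WeightedSums

section WeightedSumsEquality

variable {ι W : Type*} [NormedAddCommGroup W] {s : Finset ι} {a : ι → ℝ}

theorem sum_mul_norm_sq_eq_zero_iff (ha : ∀ i ∈ s, 0 < a i) (v : ι → W) :
    ∑ i ∈ s, a i * ‖v i‖ ^ 2 = 0 ↔ ∀ i ∈ s, v i = 0 := by
  rw [sum_eq_zero_iff_of_nonneg fun i hi ↦ mul_nonneg (ha i hi).le (sq_nonneg _)]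
  refine forall₂_congr fun i hi ↦ ?_
  rw [mul_eq_zero_iff_left (ha i hi).ne', sq_eq_zero_iff, norm_eq_zero]

theorem sum_mul_norm_sq_eq_norm_sum_sq_iff [InnerProductSpace ℝ W] (ha : ∀ i ∈ s, 0 < a i)
    (hs : ∑ i ∈ s, (a i)⁻¹ = 1) (v : ι → W) :
    ∑ i ∈ s, a i * ‖v i‖ ^ 2 = ‖∑ i ∈ s, v i‖ ^ 2 ↔
      ∀ i ∈ s, v i = (a i)⁻¹ • ∑ k ∈ s, v k := by
  rw [← sub_eq_zero, ← sum_mul_norm_sub_inv_smul_sum_sq (fun i hi ↦ (ha i hi).ne') hs,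
    sum_mul_norm_sq_eq_zero_iff ha]
  simp only [sub_eq_zero]

end WeightedSumsEquality

theorem forall_eq_inv_smul_sum_iff {ι K M : Type*} [DivisionSemiring K] [AddCommMonoid M]
    [Module K M] {s : Finset ι} {a : ι → K} (ha : ∀ i ∈ s, a i ≠ 0) (hs : ∑ i ∈ s, (a i)⁻¹ = 1)
    {o : ι} (ho : o ∈ s) (v : ι → M) :
    (∀ i ∈ s, v i = (a i)⁻¹ • ∑ k ∈ s, v k) ↔ ∀ i ∈ s, a i • v i = a o • v o := by
  have eq_iff_smul_eq (u : M) : (∀ i ∈ s, v i = (a i)⁻¹ • u) ↔ ∀ i ∈ s, a i • v i = u :=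
    forall₂_congr fun i hi ↦ eq_inv_smul_iff₀ (ha i hi)
  rw [eq_iff_smul_eq]
  refine ⟨fun h i hi ↦ (h i hi).trans (h o ho).symm, fun h ↦ ?_⟩
  have sum_eq : ∑ k ∈ s, v k = a o • v o := by
    rw [sum_congr rfl ((eq_iff_smul_eq _).mpr h), ← sum_smul, hs, one_smul]
  rwa [sum_eq]

section Arrays

variable {ι W : Type*} [Fintype ι] [NormedAddCommGroup W] [InnerProductSpace ℝ W]

theorem sum_sum_mul_norm_sq_eq_norm_sum_diag_sq_iff {w : ι → ι → ℝ} (hw : ∀ i j, 0 < w i j)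
    (hs : ∑ i, (w i i)⁻¹ = 1) (ζ : ι → ι → W) :
    ∑ i, ∑ j, w i j * ‖ζ i j‖ ^ 2 = ‖∑ i, ζ i i‖ ^ 2 ↔
      (∀ i j, i ≠ j → ζ i j = 0) ∧ ∀ i, ζ i i = (w i i)⁻¹ • ∑ k, ζ k k := by
  classical
  have split : ∑ i, ∑ j, w i j * ‖ζ i j‖ ^ 2 =
      ∑ i, ∑ j with i ≠ j, w i j * ‖ζ i j‖ ^ 2 + ∑ i, w i i * ‖ζ i i‖ ^ 2 := by
    rw [← sum_add_distrib]
    refine sum_congr rfl fun i _ ↦ ?_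
    rw [filter_ne, sum_erase_add _ _ (mem_univ i)]
  have offDiag_nonneg (i : ι) : 0 ≤ ∑ j with i ≠ j, w i j * ‖ζ i j‖ ^ 2 :=
    sum_nonneg fun j _ ↦ mul_nonneg (hw i j).le (sq_nonneg _)
  have offDiag_eq_zero_iff :
      ∑ i, ∑ j with i ≠ j, w i j * ‖ζ i j‖ ^ 2 = 0 ↔ ∀ i j, i ≠ j → ζ i j = 0 := by
    rw [sum_eq_zero_iff_of_nonneg fun i _ ↦ offDiag_nonneg i]
    simp only [sum_mul_norm_sq_eq_zero_iff fun j _ ↦ hw _ j, mem_univ, mem_filter, true_and,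
      forall_const]
  have diag_ge := norm_sum_sq_le_sum_mul_norm_sq (fun i _ ↦ hw i i) hs fun i ↦ ζ i i
  have diag_eq_iff := sum_mul_norm_sq_eq_norm_sum_sq_iff (fun i _ ↦ hw i i) hs fun i ↦ ζ i i
  simp only [mem_univ, forall_const] at diag_eq_iff
  rw [split, ← offDiag_eq_zero_iff, ← diag_eq_iff]
  have offDiag_sum_nonneg := sum_nonneg fun i (_ : i ∈ univ) ↦ offDiag_nonneg i
  constructor
  · intro h
    constructor <;> linarith
  · rintro ⟨offDiag, diag⟩
    rw [offDiag, diag, zero_add]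

variable [DecidableEq ι]

theorem mul_sum_sum_add_mul_sum_sum_ne {R : Type*} [NonUnitalNonAssocSemiring R] (A B : R) (o : ι)
    (f : ι → ι → R) :
    A * ∑ i, ∑ j, f i j + B * ∑ i with i ≠ o, ∑ j with j ≠ o, f i j =
      ∑ i, ∑ j, (if i ≠ o ∧ j ≠ o then A + B else A) * f i j := by
  have split (i j : ι) : (if i ≠ o ∧ j ≠ o then A + B else A) * f i j =
      A * f i j + if i ≠ o then if j ≠ o then B * f i j else 0 else 0 := by
    rw [← ite_and]
    split_ifs
    · rw [add_mul]
    · rw [add_zero]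
  simp only [split, sum_add_distrib, mul_sum, sum_filter, sum_ite_irrel, sum_const_zero,
    mul_ite, mul_zero]

theorem mul_sum_sum_norm_sq_add_eq_norm_sum_diag_sq_iff {A B : ℝ} (hA : 0 < A) (hAB : 0 < A + B)
    (hs : A⁻¹ + (Fintype.card ι - 1) * (A + B)⁻¹ = 1) (o : ι) (ζ : ι → ι → W) :
    A * ∑ i, ∑ j, ‖ζ i j‖ ^ 2 + B * ∑ i with i ≠ o, ∑ j with j ≠ o, ‖ζ i j‖ ^ 2 =
        ‖∑ i, ζ i i‖ ^ 2 ↔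
      (∀ i j, i ≠ j → ζ i j = 0) ∧ ∀ i, i ≠ o → (A + B) • ζ i i = A • ζ o o := by
  let w (i j : ι) : ℝ := if i ≠ o ∧ j ≠ o then A + B else A
  have w_pos (i j : ι) : 0 < w i j := by
    dsimp only [w]
    split_ifs <;> assumption
  have w_base : w o o = A := by simp [w]
  have w_diag {i : ι} (hi : i ≠ o) : w i i = A + B := by simp [w, hi]
  have sum_inv : ∑ i, (w i i)⁻¹ = 1 := by
    rw [← add_sum_erase _ _ (mem_univ o), w_base,
      sum_congr rfl fun i hi ↦ by rw [w_diag (ne_of_mem_erase hi)], sum_const, nsmul_eq_mul,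
      cast_card_erase_of_mem (mem_univ o), card_univ, hs]
  have diag_iff := forall_eq_inv_smul_sum_iff (fun i _ ↦ (w_pos i i).ne') sum_inv (mem_univ o)
    fun i ↦ ζ i i
  simp only [mem_univ, forall_const] at diag_iff
  rw [mul_sum_sum_add_mul_sum_sum_ne, sum_sum_mul_norm_sq_eq_norm_sum_diag_sq_iff w_pos sum_inv,
    diag_iff, w_base]
  refine and_congr_right fun _ ↦ ⟨fun h i hi ↦ w_diag hi ▸ h i, fun h i ↦ ?_⟩
  obtain rfl | hi := eq_or_ne i o
  · rw [w_base]
  · rw [w_diag hi, h i hi]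

end Arrays

/-- The coefficient `a(r)` of the Casorati inequalities in dimension `n`. Both arguments are real;
the value is meaningful only for `n ≠ 0` and `r ≠ 0`. -/
noncomputable def casoratiCoeff (n r : ℝ) : ℝ :=
  (n - 1) * (n + r) * (n ^ 2 - n - r) / (n * r)

theorem add_casoratiCoeff_div {n r : ℝ} (hn : n ≠ 0) (hn' : n - 1 ≠ 0) (hr : r ≠ 0) :
    (n + r) / n + casoratiCoeff n r / (n - 1) = (n + r) * (n - 1) / r := by
  rw [casoratiCoeff]
  field_simp
  ring

/-- `o` plays the role of the last index `n`. -/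
theorem casorati_vector_equality_iff_general {ι W : Type*} [Fintype ι] [DecidableEq ι]
    [NormedAddCommGroup W] [InnerProductSpace ℝ W] {n : ℕ} (hι : Fintype.card ι = n) (hn : 2 ≤ n)
    {r : ℝ} (hr : 0 < r) (o : ι) (ζ : ι → ι → W) :
    ((n + r) / n) * ∑ i, ∑ j, ‖ζ i j‖ ^ 2 +
        (casoratiCoeff n r / (n - 1)) * ∑ i with i ≠ o, ∑ j with j ≠ o, ‖ζ i j‖ ^ 2 =
        ‖∑ i, ζ i i‖ ^ 2 ↔
      (∀ i j, i ≠ j → ζ i j = 0) ∧ ∀ i, i ≠ o → ζ i i = (r / (n * (n - 1))) • ζ o o := by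
  have n_pos : (0 : ℝ) < n := by positivity
  have pred_pos : (0 : ℝ) < n - 1 := sub_pos.mpr (by exact_mod_cast hn)
  have weight_eq := add_casoratiCoeff_div n_pos.ne' pred_pos.ne' hr.ne'
  have weight_pos : 0 < (n + r) / n + casoratiCoeff n r / (n - 1) := weight_eq ▸ by positivity
  have sum_inv : ((n + r) / n)⁻¹ +
      (Fintype.card ι - 1) * ((n + r) / n + casoratiCoeff n r / (n - 1))⁻¹ = 1 := by
    rw [weight_eq, hι]
    field_simp
  have ratio : ((n + r) / n + casoratiCoeff n r / (n - 1))⁻¹ * ((n + r) / n) =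
      r / (n * (n - 1)) := by
    rw [weight_eq]
    field_simp
  rw [mul_sum_sum_norm_sq_add_eq_norm_sum_diag_sq_iff (by positivity) weight_pos sum_inv]
  simp only [← eq_inv_smul_iff₀ weight_pos.ne', smul_smul, ratio]

/-- Equality in the Casorati vector inequality holds iff `ζ_{ij} = 0`
for `i ≠ j` and `ζ_{11} = ⋯ = ζ_{n−1,n−1} = (r/(n(n−1))) ζ_{nn}`. -/
theorem casorati_vector_equality_iff
    {W : Type*} [NormedAddCommGroup W] [InnerProductSpace ℝ W]
    (n : ℕ) (hn : 2 ≤ n) (r : ℝ) (hr : 0 < r)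
    (ζ : Fin n → Fin n → W) (hζ : ∀ i j : Fin n, ζ i j = ζ j i) :
    ((((n : ℝ) + r) / (n : ℝ)) * ∑ i : Fin n, ∑ j : Fin n, ‖ζ i j‖ ^ 2
      + ((((n : ℝ) - 1) * ((n : ℝ) + r) * ((n : ℝ) ^ 2 - (n : ℝ) - r) / ((n : ℝ) * r))
            / ((n : ℝ) - 1)) *
          ∑ i ∈ Finset.univ.filter (fun i : Fin n => (i : ℕ) < n - 1),
            ∑ j ∈ Finset.univ.filter (fun j : Fin n => (j : ℕ) < n - 1),
              ‖ζ i j‖ ^ 2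
      = ‖∑ i : Fin n, ζ i i‖ ^ 2) ↔
    ((∀ i j : Fin n, i ≠ j → ζ i j = 0) ∧
      (∀ i : Fin n, (i : ℕ) < n - 1 →
        ζ i i = (r / ((n : ℝ) * ((n : ℝ) - 1))) •
          ζ ⟨n - 1, by omega⟩ ⟨n - 1, by omega⟩)) := by
  have lt_iff (i : Fin n) : (i : ℕ) < n - 1 ↔ i ≠ ⟨n - 1, by omega⟩ := by
    simp only [ne_eq, Fin.ext_iff]
    lia
  simpa only [lt_iff, casoratiCoeff] using
    casorati_vector_equality_iff_general (Fintype.card_fin n) hn hr _ ζ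
end

section
/- Let V be an n-dimensional real inner product space (n ≥ 2), W a real inner product space, ζ : V × V → W a symmetric bilinear map, and T the tensor defined by the algebraic Gauss equation. Fix an orthonormal basis (e_1,…,e_n) of V with ζ_{ij} = ζ(e_i,e_j), and let Π_{n−1} be the hyperplane spanned by e_1,…,e_{n−1}. Then equality 2τ_T/(n(n−1)) = (1/2) C^{T,ζ} + ((n+1)/(2n)) C^{T,ζ}(Π_{n−1}) holds if and only if ζ_{ij} = 0 for all i ≠ j, i,j ∈ {1,…,n}, and ζ_{11} = ζ_{22} = ⋯ = ζ_{n−1,n−1} = (1/2) ζ_{nn}. -/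
open RealInnerProductSpace

/-!
Let `a i = ζ(e_i, e_i)`. The Gauss equation gives `2τ = ‖∑ a i‖² - ∑ ‖ζ(e_i, e_j)‖²`, so the
asserted equality says that `2 ‖∑ a i‖²` is `n + 1` times the total squared norm of `ζ`, the
components in the hyperplane being counted twice. The off-diagonal components only contribute
nonnegative terms to the right-hand side and must vanish. What remains is the equality case of
the weighted Cauchy-Schwarz inequality `‖∑ w i • x i‖² ≤ (∑ w i) * ∑ w i * ‖x i‖²` for
`a i = w i • x i`, with weight `1` on the normal vector of the hyperplane and `1/2` on the others:
all the `x i` coincide.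
-/

open Finset

section DoubleSums

variable {ι M : Type*} [AddCommMonoid M]

lemma sum_sum_eq_sum_diag_add_sum_offDiag (s : Finset ι) (g : ι → ι → M) :
    ∑ i ∈ s, ∑ j ∈ s, g i j = ∑ i ∈ s, g i i + ∑ p ∈ s.offDiag, g p.1 p.2 := by
  classical rw [← sum_product', ← s.diag_union_offDiag, sum_union s.disjoint_diag_offDiag, sum_diag]

lemma sum_sum_eq_sum_diag_add_two_nsmul_sum_lt [Fintype ι] [LinearOrder ι] (g : ι → ι → M)
    (hg : ∀ i j, g i j = g j i) :
    ∑ i, ∑ j, g i j = ∑ i, g i i + 2 • ∑ i, ∑ j, if i < j then g i j else 0 := by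
  have trichotomy (i j : ι) : g i j = (if i = j then g i j else 0) +
      ((if i < j then g i j else 0) + if j < i then g i j else 0) := by
    rcases lt_trichotomy i j with h | rfl | h
    · simp [h, h.ne, h.not_gt]
    · simp
    · simp [h, h.ne', h.not_gt]
  have swap : ∑ i, ∑ j, (if j < i then g i j else 0) = ∑ i, ∑ j, if i < j then g i j else 0 := by
    rw [sum_comm]
    simp only [hg]
  calc ∑ i, ∑ j, g i j
      = ∑ i, ∑ j, ((if i = j then g i j else 0) +
          ((if i < j then g i j else 0) + if j < i then g i j else 0)) :=
        sum_congr rfl fun i _ => sum_congr rfl fun j _ => trichotomy i j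
    _ = ∑ i, g i i + 2 • ∑ i, ∑ j, if i < j then g i j else 0 := by
        simp only [sum_add_distrib, swap, two_nsmul, sum_ite_eq, mem_univ, if_true]

end DoubleSums

lemma sum_offDiag_norm_sq_eq_zero_iff {ι W : Type*} [NormedAddCommGroup W] (s : Finset ι)
    (h : ι → ι → W) :
    ∑ p ∈ s.offDiag, ‖h p.1 p.2‖ ^ 2 = 0 ↔ ∀ i ∈ s, ∀ j ∈ s, i ≠ j → h i j = 0 := by
  rw [sum_eq_zero_iff_of_nonneg fun p _ => sq_nonneg _]
  simp only [mem_offDiag, Prod.forall, sq_eq_zero_iff, norm_eq_zero]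
  grind

section WeightedCauchySchwarz

variable {ι W : Type*} [NormedAddCommGroup W] [InnerProductSpace ℝ W]
  (s : Finset ι) (w : ι → ℝ) (x : ι → W)

lemma sum_mul_sum_mul_norm_sq_sub_norm_sum_smul_sq :
    (∑ i ∈ s, w i) * ∑ i ∈ s, w i * ‖x i‖ ^ 2 - ‖∑ i ∈ s, w i • x i‖ ^ 2 =
      (1 / 2) * ∑ i ∈ s, ∑ j ∈ s, w i * w j * ‖x i - x j‖ ^ 2 := by
  have norm_sum : ‖∑ i ∈ s, w i • x i‖ ^ 2 = ∑ i ∈ s, ∑ j ∈ s, w i * w j * ⟪x i, x j⟫ := by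
    simp_rw [← real_inner_self_eq_norm_sq, sum_inner, inner_sum, real_inner_smul_left,
      real_inner_smul_right, mul_assoc]
  have left : (∑ i ∈ s, w i) * ∑ i ∈ s, w i * ‖x i‖ ^ 2 =
      ∑ i ∈ s, ∑ j ∈ s, w i * w j * ‖x j‖ ^ 2 := by
    simp_rw [sum_mul_sum, mul_assoc]
  have right : (∑ i ∈ s, w i) * ∑ i ∈ s, w i * ‖x i‖ ^ 2 =
      ∑ i ∈ s, ∑ j ∈ s, w i * w j * ‖x i‖ ^ 2 := by
    rw [left, sum_comm]
    simp_rw [mul_comm (w _) (w _)]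
  have expand : ∑ i ∈ s, ∑ j ∈ s, w i * w j * ‖x i - x j‖ ^ 2 =
      ∑ i ∈ s, ∑ j ∈ s, w i * w j * ‖x i‖ ^ 2 - 2 * ∑ i ∈ s, ∑ j ∈ s, w i * w j * ⟪x i, x j⟫ +
        ∑ i ∈ s, ∑ j ∈ s, w i * w j * ‖x j‖ ^ 2 := by
    simp_rw [norm_sub_sq_real, mul_sum, ← sum_sub_distrib, ← sum_add_distrib]
    exact sum_congr rfl fun i _ => sum_congr rfl fun j _ => by ring
  rw [expand, ← left, ← right, norm_sum]
  ring

variable {s w}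

lemma norm_sum_smul_sq_le_sum_mul_sum_mul_norm_sq (hw : ∀ i ∈ s, 0 ≤ w i) :
    ‖∑ i ∈ s, w i • x i‖ ^ 2 ≤ (∑ i ∈ s, w i) * ∑ i ∈ s, w i * ‖x i‖ ^ 2 := by
  rw [← sub_nonneg, sum_mul_sum_mul_norm_sq_sub_norm_sum_smul_sq]
  exact mul_nonneg (by norm_num) <| sum_nonneg fun i hi => sum_nonneg fun j hj =>
    mul_nonneg (mul_nonneg (hw i hi) (hw j hj)) (sq_nonneg _)

lemma norm_sum_smul_sq_eq_sum_mul_sum_mul_norm_sq_iff (hw : ∀ i ∈ s, 0 < w i) :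
    ‖∑ i ∈ s, w i • x i‖ ^ 2 = (∑ i ∈ s, w i) * ∑ i ∈ s, w i * ‖x i‖ ^ 2 ↔
      ∀ i ∈ s, ∀ j ∈ s, x i = x j := by
  have term_nonneg (i) (hi : i ∈ s) (j) (hj : j ∈ s) : 0 ≤ w i * w j * ‖x i - x j‖ ^ 2 :=
    mul_nonneg (mul_pos (hw i hi) (hw j hj)).le (sq_nonneg _)
  have term_eq_zero_iff (i) (hi : i ∈ s) (j) (hj : j ∈ s) :
      w i * w j * ‖x i - x j‖ ^ 2 = 0 ↔ x i = x j := by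
    simp [(hw i hi).ne', (hw j hj).ne', sub_eq_zero]
  rw [eq_comm, ← sub_eq_zero, sum_mul_sum_mul_norm_sq_sub_norm_sum_smul_sq,
    mul_eq_zero_iff_left (by norm_num),
    sum_eq_zero_iff_of_nonneg fun i hi => sum_nonneg (term_nonneg i hi)]
  refine forall₂_congr fun i hi => ?_
  rw [sum_eq_zero_iff_of_nonneg (term_nonneg i hi)]
  exact forall₂_congr (term_eq_zero_iff i hi)

end WeightedCauchySchwarz

section HyperplaneWeights

variable {ι W : Type*} [DecidableEq ι]

/-- The weights for which the weighted Cauchy-Schwarz inequality yields the diagonal part of the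
Casorati inequality: `1` on the index `o` of the normal vector of the hyperplane and `1/2` on the
indices of its basis vectors. -/
noncomputable def hyperplaneWeight (o i : ι) : ℝ :=
  if i = o then 1 else 1 / 2

lemma hyperplaneWeight_pos (o i : ι) : 0 < hyperplaneWeight o i := by
  unfold hyperplaneWeight
  split_ifs <;> norm_num

variable [NormedAddCommGroup W] [InnerProductSpace ℝ W]

lemma hyperplaneWeight_inv_smul_eq_iff (o : ι) (a : ι → W) :
    (∀ i j, (hyperplaneWeight o i)⁻¹ • a i = (hyperplaneWeight o j)⁻¹ • a j) ↔
      ∀ i, i ≠ o → a i = (1 / 2 : ℝ) • a o := by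
  have eq_normal_iff (i : ι) (hi : i ≠ o) :
      (hyperplaneWeight o i)⁻¹ • a i = a o ↔ a i = (1 / 2 : ℝ) • a o := by
    rw [hyperplaneWeight, if_neg hi, inv_smul_eq_iff₀ (by norm_num)]
  have normal : (hyperplaneWeight o o)⁻¹ • a o = a o := by simp [hyperplaneWeight]
  constructor
  · intro h i hi
    exact (eq_normal_iff i hi).1 ((h i o).trans normal)
  · intro h
    have eq_normal (i : ι) : (hyperplaneWeight o i)⁻¹ • a i = a o := by
      obtain rfl | hi := eq_or_ne i o
      · exact normal
      · exact (eq_normal_iff i hi).2 (h i hi)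
    exact fun i j => (eq_normal i).trans (eq_normal j).symm

variable [Fintype ι]

lemma sum_hyperplaneWeight (o : ι) :
    ∑ i, hyperplaneWeight o i = ((Fintype.card ι : ℝ) + 1) / 2 := by
  have (i : ι) : hyperplaneWeight o i = 1 / 2 + if i = o then 1 / 2 else 0 := by
    unfold hyperplaneWeight
    split_ifs <;> norm_num
  simp only [this, sum_add_distrib, sum_const, card_univ, nsmul_eq_mul, sum_ite_eq', mem_univ,
    if_true]
  ring

lemma sum_hyperplaneWeight_mul_norm_inv_smul_sq (o : ι) (a : ι → W) :
    ∑ i, hyperplaneWeight o i * ‖(hyperplaneWeight o i)⁻¹ • a i‖ ^ 2 =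
      ∑ i, ‖a i‖ ^ 2 + ∑ i ∈ univ.erase o, ‖a i‖ ^ 2 := by
  have off (i) (hi : i ∈ univ.erase o) :
      hyperplaneWeight o i * ‖(hyperplaneWeight o i)⁻¹ • a i‖ ^ 2 = 2 * ‖a i‖ ^ 2 := by
    rw [hyperplaneWeight, if_neg (ne_of_mem_erase hi), norm_smul]
    norm_num
    ring
  rw [← add_sum_erase _ _ (mem_univ o), ← add_sum_erase _ (fun i => ‖a i‖ ^ 2) (mem_univ o),
    sum_congr rfl off, ← mul_sum]
  simp only [hyperplaneWeight, if_true, inv_one, one_smul]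
  ring

lemma two_mul_norm_sum_sq_le (o : ι) (a : ι → W) :
    2 * ‖∑ i, a i‖ ^ 2 ≤
      ((Fintype.card ι : ℝ) + 1) * (∑ i, ‖a i‖ ^ 2 + ∑ i ∈ univ.erase o, ‖a i‖ ^ 2) := by
  have cauchy := norm_sum_smul_sq_le_sum_mul_sum_mul_norm_sq (s := univ)
    (fun i => (hyperplaneWeight o i)⁻¹ • a i) fun i _ => (hyperplaneWeight_pos o i).le
  simp only [smul_inv_smul₀ (hyperplaneWeight_pos o _).ne', sum_hyperplaneWeight,
    sum_hyperplaneWeight_mul_norm_inv_smul_sq] at cauchy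
  linarith

lemma two_mul_norm_sum_sq_eq_iff (o : ι) (a : ι → W) :
    2 * ‖∑ i, a i‖ ^ 2 =
        ((Fintype.card ι : ℝ) + 1) * (∑ i, ‖a i‖ ^ 2 + ∑ i ∈ univ.erase o, ‖a i‖ ^ 2) ↔
      ∀ i, i ≠ o → a i = (1 / 2 : ℝ) • a o := by
  have cauchy := norm_sum_smul_sq_eq_sum_mul_sum_mul_norm_sq_iff (s := univ)
    (fun i => (hyperplaneWeight o i)⁻¹ • a i) fun i _ => hyperplaneWeight_pos o i
  simp only [smul_inv_smul₀ (hyperplaneWeight_pos o _).ne', sum_hyperplaneWeight,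
    sum_hyperplaneWeight_mul_norm_inv_smul_sq, mem_univ, true_imp_iff,
    hyperplaneWeight_inv_smul_eq_iff] at cauchy
  rw [← cauchy]
  constructor <;> intro h <;> linarith

end HyperplaneWeights

section Curvature

variable {ι W : Type*} [NormedAddCommGroup W] [InnerProductSpace ℝ W] (h : ι → ι → W)

/-- The components `T(e_i, e_j, e_k, e_l)` of the tensor given by the algebraic Gauss equation,
where `h i j` stands for `ζ(e_i, e_j)`. -/
def gaussTensor (i j k l : ι) : ℝ :=
  ⟪h i l, h j k⟫ - ⟪h i k, h j l⟫

/-- The scalar curvature `τ_T` of a tensor with components `T i j k l = T(e_i, e_j, e_k, e_l)` in an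
orthonormal frame. -/
def scalarCurvature [Fintype ι] [LinearOrder ι] (T : ι → ι → ι → ι → ℝ) : ℝ :=
  ∑ i, ∑ j, if i < j then T i j j i else 0

/-- The algebraic Casorati curvature of the span of the frame vectors `e_i`, `i ∈ s`, where `h i j`
stands for `ζ(e_i, e_j)`. The whole space is `s = univ`. -/
noncomputable def casoratiCurvature (s : Finset ι) : ℝ :=
  (1 / (#s : ℝ)) * ∑ i ∈ s, ∑ j ∈ s, ‖h i j‖ ^ 2

variable {h}

lemma two_mul_scalarCurvature_gaussTensor [Fintype ι] [LinearOrder ι]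
    (h_symm : ∀ i j, h i j = h j i) :
    2 * scalarCurvature (gaussTensor h) = ‖∑ i, h i i‖ ^ 2 - ∑ i, ∑ j, ‖h i j‖ ^ 2 := by
  have gauss_diag (i : ι) : gaussTensor h i i i i = 0 := sub_self _
  have gauss_symm (i j : ι) : gaussTensor h i j j i = gaussTensor h j i i j := by
    simp only [gaussTensor, real_inner_comm]
  have gauss_eq (i j : ι) : gaussTensor h i j j i = ⟪h i i, h j j⟫ - ‖h i j‖ ^ 2 := by
    rw [gaussTensor, h_symm j i, real_inner_self_eq_norm_sq]
  calc 2 * scalarCurvature (gaussTensor h)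
      = ∑ i, ∑ j, gaussTensor h i j j i := by
        rw [sum_sum_eq_sum_diag_add_two_nsmul_sum_lt _ gauss_symm]
        simp only [gauss_diag, sum_const_zero, zero_add, nsmul_eq_mul, Nat.cast_ofNat,
          scalarCurvature]
    _ = ‖∑ i, h i i‖ ^ 2 - ∑ i, ∑ j, ‖h i j‖ ^ 2 := by
        rw [← real_inner_self_eq_norm_sq, sum_inner]
        simp only [gauss_eq, sum_sub_distrib, inner_sum]

variable (h)

lemma two_mul_norm_trace_sq_eq_iff [Fintype ι] [DecidableEq ι] (o : ι) :
    2 * ‖∑ i, h i i‖ ^ 2 = ((Fintype.card ι : ℝ) + 1) * (∑ i, ∑ j, ‖h i j‖ ^ 2 +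
        ∑ i ∈ univ.erase o, ∑ j ∈ univ.erase o, ‖h i j‖ ^ 2) ↔
      (∀ i j, i ≠ j → h i j = 0) ∧ ∀ i, i ≠ o → h i i = (1 / 2 : ℝ) • h o o := by
  set N : ℝ := Fintype.card ι + 1
  have N_pos : 0 < N := by positivity
  set D := ∑ i, ‖h i i‖ ^ 2 + ∑ i ∈ univ.erase o, ‖h i i‖ ^ 2
  set E := ∑ p ∈ univ.offDiag, ‖h p.1 p.2‖ ^ 2
  set E' := ∑ p ∈ (univ.erase o).offDiag, ‖h p.1 p.2‖ ^ 2
  have split : ∑ i, ∑ j, ‖h i j‖ ^ 2 + ∑ i ∈ univ.erase o, ∑ j ∈ univ.erase o, ‖h i j‖ ^ 2 =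
      D + (E + E') := by
    simp only [sum_sum_eq_sum_diag_add_sum_offDiag]
    ring
  have E_nonneg : 0 ≤ E := sum_nonneg fun p _ => sq_nonneg _
  have E'_nonneg : 0 ≤ E' := sum_nonneg fun p _ => sq_nonneg _
  have E'_le : E' ≤ E := sum_le_sum_of_subset_of_nonneg (offDiag_mono (erase_subset o univ))
    fun p _ _ => sq_nonneg _
  have diag_le : 2 * ‖∑ i, h i i‖ ^ 2 ≤ N * D := two_mul_norm_sum_sq_le o fun i => h i i
  have off_diag_iff : E = 0 ↔ ∀ i j, i ≠ j → h i j = 0 := by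
    simpa using sum_offDiag_norm_sq_eq_zero_iff univ h
  rw [← off_diag_iff, ← two_mul_norm_sum_sq_eq_iff o fun i => h i i, split, mul_add]
  constructor
  · intro eq
    have off_nonpos : E + E' ≤ 0 := nonpos_of_mul_nonpos_right (by linarith) N_pos
    have off_zero : E + E' = 0 := by linarith
    exact ⟨by linarith, by rw [eq, off_zero, mul_zero, add_zero]⟩
  · rintro ⟨E_zero, diag_eq⟩
    have E'_zero : E' = 0 := by linarith
    rw [diag_eq, E_zero, E'_zero, add_zero, mul_zero, add_zero]

end Curvature

lemma val_lt_sub_one_iff_ne {n : ℕ} (hn : n - 1 < n) (i : Fin n) :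
    (i : ℕ) < n - 1 ↔ i ≠ ⟨n - 1, hn⟩ := by
  rw [Fin.ne_iff_vne, (Nat.le_sub_one_of_lt i.isLt).lt_iff_ne]

theorem algebraic_casorati_equality_delta_iff_general {ι W : Type*} [Fintype ι] [LinearOrder ι]
    [Nontrivial ι] [NormedAddCommGroup W] [InnerProductSpace ℝ W] (h : ι → ι → W)
    (h_symm : ∀ i j, h i j = h j i) (o : ι) :
    2 * scalarCurvature (gaussTensor h) / ((Fintype.card ι : ℝ) * ((Fintype.card ι : ℝ) - 1)) =
        (1 / 2) * casoratiCurvature h univ +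
          (((Fintype.card ι : ℝ) + 1) / (2 * (Fintype.card ι : ℝ))) *
            casoratiCurvature h (univ.erase o) ↔
      (∀ i j, i ≠ j → h i j = 0) ∧ ∀ i, i ≠ o → h i i = (1 / 2 : ℝ) • h o o := by
  have one_lt : (1 : ℝ) < Fintype.card ι := by exact_mod_cast Fintype.one_lt_card
  rw [← two_mul_norm_trace_sq_eq_iff h o, two_mul_scalarCurvature_gaussTensor h_symm,
    casoratiCurvature, casoratiCurvature, cast_card_erase_of_mem (mem_univ o), card_univ]
  generalize (Fintype.card ι : ℝ) = N at one_lt ⊢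
  have N_sub_one_pos : 0 < N - 1 := by linarith
  field_simp
  constructor <;> intro eq <;> linarith

/-- Equality
`2τ_T/(n(n−1)) = (1/2) C^{T,ζ} + ((n+1)/(2n)) C^{T,ζ}(P_{n−1})` holds iff
`ζ_{ij} = 0` for `i ≠ j` and `ζ_{11} = ⋯ = ζ_{n−1,n−1} = (1/2) ζ_{nn}`. -/
theorem algebraic_casorati_equality_delta_iff
    {V W : Type*} [NormedAddCommGroup V] [InnerProductSpace ℝ V]
    [FiniteDimensional ℝ V] [NormedAddCommGroup W] [InnerProductSpace ℝ W]
    (n : ℕ) (hn : 2 ≤ n) (e : OrthonormalBasis (Fin n) ℝ V)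
    (ζ : V →ₗ[ℝ] V →ₗ[ℝ] W) (hζ : ∀ X Y : V, ζ X Y = ζ Y X)
    (T : V → V → V → V → ℝ)
    (hT : ∀ X Y Z W' : V, T X Y Z W' = ⟪ζ X W', ζ Y Z⟫ - ⟪ζ X Z, ζ Y W'⟫)
    (τ C CP : ℝ)
    (hτ : τ = ∑ i : Fin n, ∑ j : Fin n,
        if i < j then T (e i) (e j) (e j) (e i) else 0)
    (hC : C = (1 / (n : ℝ)) * ∑ i : Fin n, ∑ j : Fin n, ‖ζ (e i) (e j)‖ ^ 2)
    (hCP : CP = (1 / ((n : ℝ) - 1)) *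
        ∑ i ∈ Finset.univ.filter (fun i : Fin n => (i : ℕ) < n - 1),
          ∑ j ∈ Finset.univ.filter (fun j : Fin n => (j : ℕ) < n - 1),
            ‖ζ (e i) (e j)‖ ^ 2) :
    (2 * τ / ((n : ℝ) * ((n : ℝ) - 1)) =
        (1 / 2) * C + (((n : ℝ) + 1) / (2 * (n : ℝ))) * CP) ↔
    ((∀ i j : Fin n, i ≠ j → ζ (e i) (e j) = 0) ∧
      (∀ i : Fin n, (i : ℕ) < n - 1 →
        ζ (e i) (e i) = (1 / 2 : ℝ) •
          ζ (e ⟨n - 1, by omega⟩) (e ⟨n - 1, by omega⟩))) := by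
  have : Nontrivial (Fin n) := Fin.nontrivial_iff_two_le.2 hn
  have hlast : n - 1 < n := by omega
  simpa only [hτ, hT, hC, hCP, scalarCurvature, gaussTensor, casoratiCurvature,
    val_lt_sub_one_iff_ne hlast, filter_ne', cast_card_erase_of_mem (mem_univ _), card_univ,
    Fintype.card_fin] using algebraic_casorati_equality_delta_iff_general
      (fun i j => ζ (e i) (e j)) (fun i j => hζ (e i) (e j)) ⟨n - 1, hlast⟩
end

section
/- Let V be an n-dimensional real inner product space (n ≥ 2), W a real inner product space, ζ : V × V → W a symmetric bilinear map, and T the tensor defined by the algebraic Gauss equation. Fix an orthonormal basis (e_1,…,e_n) of V with ζ_{ij} = ζ(e_i,e_j), and let Π_{n−1} be the hyperplane spanned by e_1,…,e_{n−1}. Then equality 2τ_T/(n(n−1)) = 2 C^{T,ζ} − ((2n−1)/(2n)) C^{T,ζ}(Π_{n−1}) holds if and only if ζ_{ij} = 0 for all i ≠ j, i,j ∈ {1,…,n}, and ζ_{11} = ζ_{22} = ⋯ = ζ_{n−1,n−1} = 2 ζ_{nn}. -/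
open RealInnerProductSpace

/-!
Write `h i j` for `ζ (e i) (e j)`. Since `2 τ = ‖∑ h i i‖² - ∑ ‖h i j‖²` by the Gauss equation, the
equality to be characterised is `‖∑ h i i‖² = (2n - 1) ∑ u i j ‖h i j‖²`, where `u i j` is `1 / 2`
inside the hyperplane and `1` elsewhere. This is the equality case of the Cauchy–Schwarz inequality
in `ℓ²(u)` between the matrix `h` and the diagonal matrix with entries `1 / u i i`, whose squared
norm is `2 (n - 1) + 1`; hence `h` is diagonal and `h i i` is proportional to `1 / u i i`.
-/

section CauchySchwarz

variable {κ W : Type*} [Fintype κ] [NormedAddCommGroup W] [InnerProductSpace ℝ W]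

lemma sum_mul_norm_sub_smul_sq {u μ : κ → ℝ} {a : κ → W} {c : W}
    (hc : ∑ k, (u k * μ k) • a k = (∑ k, u k * μ k ^ 2) • c) :
    ∑ k, u k * ‖a k - μ k • c‖ ^ 2 =
      ∑ k, u k * ‖a k‖ ^ 2 - (∑ k, u k * μ k ^ 2) * ‖c‖ ^ 2 := by
  have cross : ∑ k, u k * μ k * ⟪a k, c⟫ = (∑ k, u k * μ k ^ 2) * ‖c‖ ^ 2 := by
    simpa only [sum_inner, real_inner_smul_left, real_inner_self_eq_norm_sq] using
      congrArg (⟪·, c⟫) hc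
  have expand (k : κ) : u k * ‖a k - μ k • c‖ ^ 2 =
      u k * ‖a k‖ ^ 2 - 2 * (u k * μ k * ⟪a k, c⟫) + u k * μ k ^ 2 * ‖c‖ ^ 2 := by
    rw [norm_sub_sq_real, real_inner_smul_right, norm_smul, mul_pow, Real.norm_eq_abs, sq_abs]
    ring
  simp only [expand, Finset.sum_add_distrib, Finset.sum_sub_distrib, ← Finset.mul_sum,
    ← Finset.sum_mul, cross]
  ring

lemma norm_sum_smul_sq_eq_iff {u μ : κ → ℝ} (hu : ∀ k, 0 < u k) (hμ : μ ≠ 0) (a : κ → W) :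
    ‖∑ k, (u k * μ k) • a k‖ ^ 2 = (∑ k, u k * μ k ^ 2) * ∑ k, u k * ‖a k‖ ^ 2 ↔
      ∃ c, ∀ k, a k = μ k • c := by
  obtain ⟨k₀, hk₀⟩ := Function.ne_iff.mp hμ
  have mass_pos : 0 < ∑ k, u k * μ k ^ 2 :=
    Finset.sum_pos' (fun k _ ↦ mul_nonneg (hu k).le (sq_nonneg _))
      ⟨k₀, Finset.mem_univ _, mul_pos (hu k₀) (sq_pos_of_ne_zero hk₀)⟩
  constructor
  · intro heq
    obtain ⟨c, hc⟩ : ∃ c, ∑ k, (u k * μ k) • a k = (∑ k, u k * μ k ^ 2) • c :=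
      ⟨_, (smul_inv_smul₀ mass_pos.ne' _).symm⟩
    have residual : ∑ k, u k * ‖a k - μ k • c‖ ^ 2 = 0 := by
      rw [sum_mul_norm_sub_smul_sq hc, sub_eq_zero]
      rw [hc, norm_smul, mul_pow, Real.norm_eq_abs, sq_abs, sq, mul_assoc] at heq
      exact (mul_left_cancel₀ mass_pos.ne' heq).symm
    rw [Fintype.sum_eq_zero_iff_of_nonneg fun k ↦ mul_nonneg (hu k).le (sq_nonneg _)] at residual
    refine ⟨c, fun k ↦ ?_⟩
    simpa [(hu k).ne', sub_eq_zero] using congrFun residual k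
  · rintro ⟨c, hc⟩
    have weighted_sum : ∑ k, (u k * μ k) • a k = (∑ k, u k * μ k ^ 2) • c := by
      simp only [hc, smul_smul, Finset.sum_smul, sq, mul_assoc]
    have weighted_norm : ∑ k, u k * ‖a k‖ ^ 2 = (∑ k, u k * μ k ^ 2) * ‖c‖ ^ 2 := by
      simp only [hc, norm_smul, mul_pow, Real.norm_eq_abs, sq_abs, Finset.sum_mul, mul_assoc]
    rw [weighted_sum, weighted_norm, norm_smul, mul_pow, Real.norm_eq_abs, sq_abs]
    ring

end CauchySchwarz

section Matrix

variable {ι W : Type*} [Fintype ι] [NormedAddCommGroup W] [InnerProductSpace ℝ W]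

lemma norm_sum_diag_sq_eq_iff {u : ι → ι → ℝ} (hu : ∀ i j, 0 < u i j) (h : ι → ι → W) :
    ‖∑ i, h i i‖ ^ 2 = (∑ i, (u i i)⁻¹) * ∑ i, ∑ j, u i j * ‖h i j‖ ^ 2 ↔
      (∀ i j, i ≠ j → h i j = 0) ∧ ∃ c, ∀ i, h i i = (u i i)⁻¹ • c := by
  classical
  obtain _ | ⟨⟨i₀⟩⟩ := isEmpty_or_nonempty ι
  · simp
  let μ : ι × ι → ℝ := fun k ↦ if k.1 = k.2 then (u k.1 k.1)⁻¹ else 0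
  have hμ : μ ≠ 0 := Function.ne_iff.mpr ⟨(i₀, i₀), by simp [μ, (hu i₀ i₀).ne']⟩
  have pairing : ∑ k : ι × ι, (u k.1 k.2 * μ k) • h k.1 k.2 = ∑ i, h i i := by
    simp [μ, Fintype.sum_prod_type, ite_smul, (hu _ _).ne']
  have mass : ∑ k : ι × ι, u k.1 k.2 * μ k ^ 2 = ∑ i, (u i i)⁻¹ := by
    simp [μ, Fintype.sum_prod_type, ite_pow, sq, (hu _ _).ne']
  have cauchy_schwarz :=
    norm_sum_smul_sq_eq_iff (fun k : ι × ι ↦ hu k.1 k.2) hμ (fun k ↦ h k.1 k.2)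
  rw [pairing, mass, Fintype.sum_prod_type] at cauchy_schwarz
  rw [cauchy_schwarz]
  constructor
  · rintro ⟨c, hc⟩
    exact ⟨fun i j hij ↦ by simpa [μ, hij] using hc (i, j), c, fun i ↦ by simpa [μ] using hc (i, i)⟩
  · rintro ⟨off_diag, c, diag⟩
    refine ⟨c, fun ⟨i, j⟩ ↦ ?_⟩
    obtain rfl | hij := eq_or_ne i j
    · simpa [μ] using diag i
    · simpa [μ, hij] using off_diag i j hij

lemma norm_sum_diag_sq_eq_iff_of_finset (s : Finset ι) (h : ι → ι → W) :
    ‖∑ i, h i i‖ ^ 2 = (Fintype.card ι + s.card : ℝ) *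
        (∑ i, ∑ j, ‖h i j‖ ^ 2 - (∑ i ∈ s, ∑ j ∈ s, ‖h i j‖ ^ 2) / 2) ↔
      (∀ i j, i ≠ j → h i j = 0) ∧
        ∃ c, (∀ i ∈ s, h i i = (2 : ℝ) • c) ∧ ∀ i ∉ s, h i i = c := by
  classical
  let u : ι → ι → ℝ := fun i j ↦ if i ∈ s ∧ j ∈ s then 1 / 2 else 1
  have hu (i j : ι) : 0 < u i j := by
    dsimp only [u]
    split_ifs <;> norm_num
  have diag (i : ι) : (u i i)⁻¹ = 1 + if i ∈ s then 1 else 0 := by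
    by_cases hi : i ∈ s <;> norm_num [u, hi]
  have mass : ∑ i, (u i i)⁻¹ = Fintype.card ι + s.card := by
    simp [diag, Finset.sum_add_distrib]
  have block (i j : ι) : u i j * ‖h i j‖ ^ 2 =
      ‖h i j‖ ^ 2 - (if i ∈ s then if j ∈ s then ‖h i j‖ ^ 2 else 0 else 0) / 2 := by
    simp only [u, ite_and]
    split_ifs <;> ring
  have weighted_norm : ∑ i, ∑ j, u i j * ‖h i j‖ ^ 2 =
      ∑ i, ∑ j, ‖h i j‖ ^ 2 - (∑ i ∈ s, ∑ j ∈ s, ‖h i j‖ ^ 2) / 2 := by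
    simp only [block, Finset.sum_sub_distrib, ← Finset.sum_div]
    simp [Finset.sum_ite_irrel]
  rw [← mass, ← weighted_norm, norm_sum_diag_sq_eq_iff hu]
  refine and_congr_right fun _ ↦ exists_congr fun c ↦ ?_
  rw [← forall_and]
  refine forall_congr' fun i ↦ ?_
  by_cases hi : i ∈ s <;> simp [diag, hi, one_add_one_eq_two]

lemma two_mul_sum_lt_eq_sum [LinearOrder ι] {R : Type*} [NonAssocSemiring R] {f : ι → ι → R}
    (symm : ∀ i j, f i j = f j i) (diag : ∀ i, f i i = 0) :
    2 * ∑ i, ∑ j, (if i < j then f i j else 0) = ∑ i, ∑ j, f i j := by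
  have reflect : ∑ i, ∑ j, (if i < j then f i j else 0) =
      ∑ i, ∑ j, if j < i then f i j else 0 := by
    rw [Finset.sum_comm]
    simp only [symm]
  have split (i j : ι) : f i j = (if i < j then f i j else 0) + if j < i then f i j else 0 := by
    obtain hij | rfl | hij := lt_trichotomy i j
    · simp [hij, hij.not_gt]
    · simp [diag]
    · simp [hij, hij.not_gt]
  rw [two_mul]
  nth_rewrite 2 [reflect]
  simp only [← Finset.sum_add_distrib, ← split]

lemma two_mul_sum_gauss_eq [LinearOrder ι] {h : ι → ι → W} (symm : ∀ i j, h i j = h j i) :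
    2 * ∑ i, ∑ j, (if i < j then ⟪h i i, h j j⟫ - ⟪h i j, h j i⟫ else 0) =
      ‖∑ i, h i i‖ ^ 2 - ∑ i, ∑ j, ‖h i j‖ ^ 2 := by
  have trace : ∑ i, ∑ j, ⟪h i i, h j j⟫ = ‖∑ i, h i i‖ ^ 2 := by
    simp_rw [← real_inner_self_eq_norm_sq, sum_inner, inner_sum]
  have entry (i j : ι) : ⟪h i j, h j i⟫ = ‖h i j‖ ^ 2 := by
    rw [symm j i, real_inner_self_eq_norm_sq]
  rw [two_mul_sum_lt_eq_sum (fun i j ↦ by simp only [real_inner_comm]) (fun i ↦ sub_self _)]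
  simp only [Finset.sum_sub_distrib, trace, entry]

end Matrix

lemma normalized_casorati_equality_iff {K : Type*} [Field K] [NeZero (2 : K)] {n H S P : K}
    (hn : n ≠ 0) (hn' : n - 1 ≠ 0) :
    (H - S) / (n * (n - 1)) =
        2 * (1 / n * S) - (2 * n - 1) / (2 * n) * (1 / (n - 1) * P) ↔
      H = (2 * n - 1) * (S - P / 2) := by
  have difference : (H - S) / (n * (n - 1)) -
      (2 * (1 / n * S) - (2 * n - 1) / (2 * n) * (1 / (n - 1) * P)) =
        (H - (2 * n - 1) * (S - P / 2)) / (n * (n - 1)) := by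
    field_simp
    ring
  rw [← sub_eq_zero, difference, div_eq_zero_iff, or_iff_left (mul_ne_zero hn hn'), sub_eq_zero]

theorem algebraic_casorati_equality_delta_hat_iff_general
    {V W : Type*} [NormedAddCommGroup W] [InnerProductSpace ℝ W]
    (n : ℕ) (hn : 2 ≤ n) (e : Fin n → V)
    (ζ : V → V → W) (hζ : ∀ X Y : V, ζ X Y = ζ Y X)
    (T : V → V → V → V → ℝ)
    (hT : ∀ X Y Z W' : V, T X Y Z W' = ⟪ζ X W', ζ Y Z⟫ - ⟪ζ X Z, ζ Y W'⟫)
    (τ C CP : ℝ)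
    (hτ : τ = ∑ i : Fin n, ∑ j : Fin n,
        if i < j then T (e i) (e j) (e j) (e i) else 0)
    (hC : C = (1 / (n : ℝ)) * ∑ i : Fin n, ∑ j : Fin n, ‖ζ (e i) (e j)‖ ^ 2)
    (hCP : CP = (1 / ((n : ℝ) - 1)) *
        ∑ i ∈ Finset.univ.filter (fun i : Fin n => (i : ℕ) < n - 1),
          ∑ j ∈ Finset.univ.filter (fun j : Fin n => (j : ℕ) < n - 1),
            ‖ζ (e i) (e j)‖ ^ 2) :
    (2 * τ / ((n : ℝ) * ((n : ℝ) - 1)) =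
        2 * C - ((2 * (n : ℝ) - 1) / (2 * (n : ℝ))) * CP) ↔
    ((∀ i j : Fin n, i ≠ j → ζ (e i) (e j) = 0) ∧
      (∀ i : Fin n, (i : ℕ) < n - 1 →
        ζ (e i) (e i) = (2 : ℝ) •
          ζ (e ⟨n - 1, Nat.sub_one_lt_of_lt hn⟩) (e ⟨n - 1, Nat.sub_one_lt_of_lt hn⟩))) := by
  let s : Finset (Fin n) := Finset.univ.filter (fun i ↦ (i : ℕ) < n - 1)
  let p : Fin n := ⟨n - 1, Nat.sub_one_lt_of_lt hn⟩
  have hn_real : (2 : ℝ) ≤ n := by exact_mod_cast hn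
  have not_mem_iff (i : Fin n) : i ∉ s ↔ i = p := by
    simp only [s, p, Finset.mem_filter_univ, Fin.ext_iff]
    omega
  have mass : (Fintype.card (Fin n) + s.card : ℝ) = 2 * n - 1 := by
    have s_eq : s = {p}ᶜ := by ext i; simp [← not_mem_iff]
    rw [s_eq, Finset.card_compl, Finset.card_singleton, Fintype.card_fin,
      Nat.cast_pred (by omega)]
    ring
  have scalar : 2 * τ = ‖∑ i, ζ (e i) (e i)‖ ^ 2 - ∑ i, ∑ j, ‖ζ (e i) (e j)‖ ^ 2 := by
    simp only [hτ, hT]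
    exact two_mul_sum_gauss_eq fun i j ↦ hζ (e i) (e j)
  rw [scalar, hC, hCP, normalized_casorati_equality_iff (by linarith) (by linarith), ← mass,
    norm_sum_diag_sq_eq_iff_of_finset s fun i j ↦ ζ (e i) (e j)]
  refine and_congr_right fun _ ↦ ?_
  simp only [not_mem_iff, forall_eq, exists_eq_right']
  simp only [s, p, Finset.mem_filter_univ]

/-- STATEMENT 13: Equality
`2τ_T/(n(n−1)) = 2 C^{T,ζ} − ((2n−1)/(2n)) C^{T,ζ}(P_{n−1})` holds iff
`ζ_{ij} = 0` for `i ≠ j` and `ζ_{11} = ⋯ = ζ_{n−1,n−1} = 2 ζ_{nn}`. -/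
theorem algebraic_casorati_equality_delta_hat_iff
    {V W : Type*} [NormedAddCommGroup V] [InnerProductSpace ℝ V]
    [FiniteDimensional ℝ V] [NormedAddCommGroup W] [InnerProductSpace ℝ W]
    (n : ℕ) (hn : 2 ≤ n) (e : OrthonormalBasis (Fin n) ℝ V)
    (ζ : V →ₗ[ℝ] V →ₗ[ℝ] W) (hζ : ∀ X Y : V, ζ X Y = ζ Y X)
    (T : V → V → V → V → ℝ)
    (hT : ∀ X Y Z W' : V, T X Y Z W' = ⟪ζ X W', ζ Y Z⟫ - ⟪ζ X Z, ζ Y W'⟫)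
    (τ C CP : ℝ)
    (hτ : τ = ∑ i : Fin n, ∑ j : Fin n,
        if i < j then T (e i) (e j) (e j) (e i) else 0)
    (hC : C = (1 / (n : ℝ)) * ∑ i : Fin n, ∑ j : Fin n, ‖ζ (e i) (e j)‖ ^ 2)
    (hCP : CP = (1 / ((n : ℝ) - 1)) *
        ∑ i ∈ Finset.univ.filter (fun i : Fin n => (i : ℕ) < n - 1),
          ∑ j ∈ Finset.univ.filter (fun j : Fin n => (j : ℕ) < n - 1),
            ‖ζ (e i) (e j)‖ ^ 2) :
    (2 * τ / ((n : ℝ) * ((n : ℝ) - 1)) =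
        2 * C - ((2 * (n : ℝ) - 1) / (2 * (n : ℝ))) * CP) ↔
    ((∀ i j : Fin n, i ≠ j → ζ (e i) (e j) = 0) ∧
      (∀ i : Fin n, (i : ℕ) < n - 1 →
        ζ (e i) (e i) = (2 : ℝ) •
          ζ (e ⟨n - 1, by omega⟩) (e ⟨n - 1, by omega⟩))) :=
  algebraic_casorati_equality_delta_hat_iff_general n hn e (fun X Y ↦ ζ X Y) hζ T hT
    τ C CP hτ hC hCP
end
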